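/- Let n ≥ 3 and let P be a finite-volume non-compact right-angled convex hyperbolic n-polyhedron. Then ν(P) = a_{n−1}(P) + v_∞(P) ≥ 5 − 2n + 2·ν_{n−1}, where ν_{n−1} = sInf {a_{n−2}(Q) + v_∞(Q) : Q a finite-volume non-compact right-angled convex hyperbolic (n−1)-polyhedron}; in particular νₙ ≥ 5 − 2n + 2ν_{n−1}. -/

import Mathlib

open scoped BigOperators

noncomputable section

/-- The Minkowski bilinear form `⟨x,y⟩ = -x₀y₀ + x₁y₁ + ⋯ + xₙyₙ` on `ℝ^{n+1}`. -/
def mink {n : ℕ} (x y : Fin (n + 1) → ℝ) : ℝ :=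
  -(x 0 * y 0) + ∑ i : Fin n, x i.succ * y i.succ

/-- The hyperboloid model of the hyperbolic space `ℍⁿ`. -/
def Hyperboloid (n : ℕ) : Set (Fin (n + 1) → ℝ) :=
  {x | mink x x = -1 ∧ 0 < x 0}

/-- The Klein projection `x ↦ (x₁/x₀, …, xₙ/x₀)` of the hyperboloid onto the unit ball. -/
def kleinMap {n : ℕ} (x : Fin (n + 1) → ℝ) : EuclideanSpace ℝ (Fin n) :=
  WithLp.toLp 2 fun i => x i.succ / x 0

/-- Dimension of a subset of a real vector space: the rank of its vector span. -/
def sdim {n : ℕ} (s : Set (EuclideanSpace ℝ (Fin n))) : ℕ :=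
  Module.finrank ℝ (vectorSpan ℝ s)

/-- A convex hyperbolic `n`-polyhedron: a finite intersection of hyperbolic half-spaces
`H_{eᵢ}⁻ = {x : ⟨eᵢ,x⟩ ≤ 0}` (with `⟨eᵢ,eᵢ⟩ = 1`) having nonempty interior
(equivalently, its Klein-model image has nonempty interior in `ℝⁿ`). -/
structure HypPolyhedron (n : ℕ) where
  m : ℕ
  e : Fin m → (Fin (n + 1) → ℝ)
  unit : ∀ i, mink (e i) (e i) = 1
  nonempty_int :
    (interior (kleinMap '' {x ∈ Hyperboloid n | ∀ i, mink (e i) x ≤ 0})).Nonempty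

namespace HypPolyhedron

variable {n : ℕ} (P : HypPolyhedron n)

/-- The set of points of the polyhedron in the hyperboloid model. -/
def carrier : Set (Fin (n + 1) → ℝ) :=
  {x ∈ Hyperboloid n | ∀ i, mink (P.e i) x ≤ 0}

/-- `P̄`: the closure of the Klein-model image of the polyhedron in the closed unit ball. -/
def cl : Set (EuclideanSpace ℝ (Fin n)) :=
  closure (kleinMap '' P.carrier)

/-- The `k`-faces of `P`: the `k`-dimensional (nonempty) exposed faces of `P̄`. -/
def faces (k : ℕ) : Set (Set (EuclideanSpace ℝ (Fin n))) :=
  {F | IsExposed ℝ P.cl F ∧ F.Nonempty ∧ sdim F = k}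

/-- `a_k(P)`: the number of `k`-faces of `P`. -/
def a (k : ℕ) : ℕ := (P.faces k).ncard

/-- Vertices of `P`: the points of `0`-dimensional exposed faces of `P̄`. -/
def verts : Set (EuclideanSpace ℝ (Fin n)) :=
  {v | IsExposed ℝ P.cl {v}}

/-- Ideal vertices: vertices lying on the unit sphere. -/
def idealVerts : Set (EuclideanSpace ℝ (Fin n)) :=
  {v ∈ P.verts | ‖v‖ = 1}

/-- Finite vertices: vertices lying in the open unit ball. -/
def finiteVerts : Set (EuclideanSpace ℝ (Fin n)) :=
  {v ∈ P.verts | ‖v‖ < 1}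

/-- `v_∞(P)`: the number of ideal vertices of `P`. -/
def vInf : ℕ := P.idealVerts.ncard

/-- The bounding hyperplane `H_e` contains the face `F`. -/
def faceInHyperplane (e : Fin (n + 1) → ℝ) (F : Set (EuclideanSpace ℝ (Fin n))) : Prop :=
  ∀ x ∈ P.carrier, kleinMap x ∈ F → mink e x = 0

/-- `P` is right-angled: whenever two distinct bounding hyperplanes both contain an
`(n-2)`-dimensional face of `P`, the corresponding unit normals are orthogonal,
i.e. the dihedral angle is `π/2`. -/
def IsRightAngled : Prop :=
  ∀ i j : Fin P.m, i ≠ j →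
    (∃ F ∈ P.faces (n - 2), P.faceInHyperplane (P.e i) F ∧ P.faceInHyperplane (P.e j) F) →
    mink (P.e i) (P.e j) = 0

/-- `P` has finite volume: `P̄` is the convex hull of its (finitely many) vertices. -/
def FiniteVolume : Prop :=
  P.verts.Finite ∧ P.cl = convexHull ℝ P.verts

/-- `P` is compact: finite volume and all vertices are finite. -/
def IsCompactPoly : Prop :=
  P.FiniteVolume ∧ ∀ v ∈ P.verts, ‖v‖ < 1

/-- `P` is ideal: finite volume and all vertices are ideal. -/
def IsIdeal : Prop :=
  P.FiniteVolume ∧ ∀ v ∈ P.verts, ‖v‖ = 1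

end HypPolyhedron

/-- `ν(P) = a_{n-1}(P) + v_∞(P)` ranging over the family `𝒫ⁿ` of finite-volume non-compact
right-angled convex hyperbolic `n`-polyhedra. -/
def nuSet (n : ℕ) : Set ℕ :=
  {m | ∃ P : HypPolyhedron n,
        P.FiniteVolume ∧ P.IsRightAngled ∧ ¬ P.IsCompactPoly ∧ P.a (n - 1) + P.vInf = m}

/-- `νₙ = sInf {ν(P) : P ∈ 𝒫ⁿ}` (with `sInf ∅ = 0`). -/
def nu (n : ℕ) : ℕ := sInf (nuSet n)

namespace RightAngled

/-! ### Minkowski geometry -/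

variable {n : ℕ}

/-- The spatial part of a vector of Minkowski space. -/
def sp (x : Fin (n + 1) → ℝ) : EuclideanSpace ℝ (Fin n) :=
  WithLp.toLp 2 fun i => x i.succ

/-- The point of the affine chart `x₀ = 1` over a point of the Klein model. -/
def lift (y : EuclideanSpace ℝ (Fin n)) : Fin (n + 1) → ℝ :=
  Fin.cons 1 y

/-- The open future light cone. -/
def fut (n : ℕ) : Set (Fin (n + 1) → ℝ) := {x | ‖sp x‖ < x 0}

@[simp] lemma sp_add (x y : Fin (n + 1) → ℝ) : sp (x + y) = sp x + sp y := rfl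
@[simp] lemma sp_sub (x y : Fin (n + 1) → ℝ) : sp (x - y) = sp x - sp y := rfl
@[simp] lemma sp_smul (c : ℝ) (x : Fin (n + 1) → ℝ) : sp (c • x) = c • sp x := rfl
@[simp] lemma sp_zero : sp (0 : Fin (n + 1) → ℝ) = 0 := rfl
@[simp] lemma sp_lift (y : EuclideanSpace ℝ (Fin n)) : sp (lift y) = y := by
  ext i; simp [sp, lift]
@[simp] lemma lift_zero (y : EuclideanSpace ℝ (Fin n)) : lift y 0 = 1 := rfl

lemma ext_sp {x y : Fin (n + 1) → ℝ} (h0 : x 0 = y 0) (h : sp x = sp y) : x = y := by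
  funext i
  refine Fin.cases h0 (fun j => ?_) i
  exact congrArg (fun v : EuclideanSpace ℝ (Fin n) => v j) h

lemma continuous_sp : Continuous (sp : (Fin (n + 1) → ℝ) → EuclideanSpace ℝ (Fin n)) := by
  unfold sp
  fun_prop

lemma mink_eq (x y : Fin (n + 1) → ℝ) : mink x y = -(x 0 * y 0) + inner ℝ (sp x) (sp y) := by
  simp [mink, sp, PiLp.inner_apply, mul_comm]

lemma mink_comm (x y : Fin (n + 1) → ℝ) : mink x y = mink y x := by
  simp [mink, mul_comm]

@[simp] lemma mink_add_right (x y z : Fin (n + 1) → ℝ) :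
    mink x (y + z) = mink x y + mink x z := by
  simp only [mink_eq, sp_add, inner_add_right, Pi.add_apply]; ring

@[simp] lemma mink_smul_right (c : ℝ) (x y : Fin (n + 1) → ℝ) :
    mink x (c • y) = c * mink x y := by
  simp only [mink_eq, sp_smul, inner_smul_right, Pi.smul_apply, smul_eq_mul]; ring

@[simp] lemma mink_zero_right (x : Fin (n + 1) → ℝ) : mink x 0 = 0 := by
  simp [mink_eq]

@[simp] lemma mink_sub_right (x y z : Fin (n + 1) → ℝ) :
    mink x (y - z) = mink x y - mink x z := by
  simp only [mink_eq, sp_sub, inner_sub_right, Pi.sub_apply]; ring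

@[simp] lemma mink_add_left (x y z : Fin (n + 1) → ℝ) :
    mink (x + y) z = mink x z + mink y z := by
  simp [mink_comm _ z]

@[simp] lemma mink_smul_left (c : ℝ) (x y : Fin (n + 1) → ℝ) :
    mink (c • x) y = c * mink x y := by
  simp [mink_comm _ y]

@[simp] lemma mink_zero_left (x : Fin (n + 1) → ℝ) : mink 0 x = 0 := by
  simp [mink_comm _ x]

@[simp] lemma mink_sub_left (x y z : Fin (n + 1) → ℝ) :
    mink (x - y) z = mink x z - mink y z := by
  simp [mink_comm _ z]

/-- Pairing with a fixed vector, as a linear functional. -/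
def minkL (x : Fin (n + 1) → ℝ) : (Fin (n + 1) → ℝ) →ₗ[ℝ] ℝ where
  toFun := mink x
  map_add' := mink_add_right x
  map_smul' c y := by simp

lemma continuous_mink (x : Fin (n + 1) → ℝ) : Continuous (mink x) :=
  (minkL x).continuous_of_finiteDimensional

lemma mink_self (x : Fin (n + 1) → ℝ) : mink x x = ‖sp x‖ ^ 2 - x 0 ^ 2 := by
  rw [mink_eq, real_inner_self_eq_norm_sq]; ring

lemma mem_fut_iff {x : Fin (n + 1) → ℝ} : x ∈ fut n ↔ mink x x < 0 ∧ 0 < x 0 := by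
  rw [mink_self]
  constructor
  · intro (h : ‖sp x‖ < x 0)
    have := norm_nonneg (sp x)
    exact ⟨by nlinarith, by linarith⟩
  · rintro ⟨h1, h2⟩
    show ‖sp x‖ < x 0
    exact lt_of_pow_lt_pow_left₀ 2 h2.le (by linarith)

lemma fut_pos {x : Fin (n + 1) → ℝ} (hx : x ∈ fut n) : 0 < x 0 := (mem_fut_iff.1 hx).2

lemma isOpen_fut : IsOpen (fut n) :=
  isOpen_lt continuous_sp.norm (continuous_apply 0)

lemma convex_fut : Convex ℝ (fut n) := by
  intro x (hx : ‖sp x‖ < x 0) y (hy : ‖sp y‖ < y 0) a b ha hb hab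
  show ‖sp (a • x + b • y)‖ < (a • x + b • y) 0
  have h := norm_add_le (a • sp x) (b • sp y)
  rw [norm_smul, norm_smul, Real.norm_of_nonneg ha, Real.norm_of_nonneg hb] at h
  simp only [sp_add, sp_smul, Pi.add_apply, Pi.smul_apply, smul_eq_mul]
  rcases ha.eq_or_lt with rfl | ha
  · have : b = 1 := by linarith
    subst this
    simpa using hy
  · nlinarith [mul_lt_mul_of_pos_left hx ha, mul_le_mul_of_nonneg_left hy.le hb]

lemma smul_mem_fut {x : Fin (n + 1) → ℝ} (hx : x ∈ fut n) {c : ℝ} (hc : 0 < c) :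
    c • x ∈ fut n := by
  change ‖sp x‖ < x 0 at hx
  show ‖sp (c • x)‖ < (c • x) 0
  simp only [sp_smul, norm_smul, Real.norm_of_nonneg hc.le, Pi.smul_apply, smul_eq_mul]
  exact mul_lt_mul_of_pos_left hx hc

lemma mink_neg_of_fut {x y : Fin (n + 1) → ℝ} (hx : x ∈ fut n) (hy : ‖sp y‖ ≤ y 0)
    (hy0 : 0 < y 0) : mink x y < 0 := by
  have hx0 := fut_pos hx
  change ‖sp x‖ < x 0 at hx
  have := real_inner_le_norm (sp x) (sp y)
  rw [mink_eq]
  nlinarith [norm_nonneg (sp x), norm_nonneg (sp y), mul_lt_mul_of_pos_right hx hy0,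
    mul_le_mul_of_nonneg_left hy (norm_nonneg (sp x))]

/-- A timelike vector in the same time cone as a future vector is a future vector. -/
lemma mem_fut_of_mink_neg {x y : Fin (n + 1) → ℝ} (hx : x ∈ fut n) (hy : mink y y < 0)
    (hxy : mink x y < 0) : y ∈ fut n := by
  refine mem_fut_iff.2 ⟨hy, ?_⟩
  by_contra h
  have hy0 : y 0 ≠ 0 := by
    intro h0
    rw [mink_self, h0] at hy
    nlinarith [norm_nonneg (sp y)]
  have hpos : 0 < ((-1 : ℝ) • y) 0 := by
    have := lt_of_le_of_ne (not_lt.1 h) hy0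
    simpa using this
  have hf : (-1 : ℝ) • y ∈ fut n := mem_fut_iff.2 ⟨by
    rw [mink_smul_left, mink_smul_right]; linarith, hpos⟩
  have := mink_neg_of_fut hx (le_of_lt hf) hpos
  rw [mink_smul_right] at this
  linarith

/-- The orthogonal complement of a future vector is positive definite. -/
lemma mink_self_pos {w u : Fin (n + 1) → ℝ} (hw : w ∈ fut n) (hu : u ≠ 0) (h : mink u w = 0) :
    0 < mink u u := by
  by_contra hneg
  have hw0 := fut_pos hw
  change ‖sp w‖ < w 0 at hw
  rw [mink_eq] at h
  rw [mink_self] at hneg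
  have hin := abs_real_inner_le_norm (sp u) (sp w)
  have hval : inner ℝ (sp u) (sp w) = u 0 * w 0 := by linarith
  rw [hval, abs_mul, abs_of_pos hw0] at hin
  have habs : ‖sp u‖ ≤ |u 0| := by
    refine (sq_le_sq₀ (norm_nonneg _) (abs_nonneg _)).1 ?_
    rw [sq_abs]; linarith
  have hz : ‖sp u‖ = 0 := by
    by_contra hne
    have hpos : 0 < ‖sp u‖ := lt_of_le_of_ne (norm_nonneg _) (Ne.symm hne)
    nlinarith [mul_lt_mul_of_pos_left hw hpos, mul_le_mul_of_nonneg_right habs hw0.le]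
  have hu0 : u 0 = 0 := by
    rw [hz, zero_mul] at hin
    have := abs_nonneg (u 0)
    have : |u 0| = 0 := by nlinarith
    simpa using this
  exact hu (ext_sp (by simpa using hu0) (by simpa using norm_eq_zero.1 hz))

lemma mink_self_eq_of_null {z u : Fin (n + 1) → ℝ} (hz0 : 0 < z 0) (hz : ‖sp z‖ = z 0)
    (h : mink u z = 0) : mink u u = ‖sp u - (u 0 / z 0) • sp z‖ ^ 2 := by
  rw [mink_eq] at h
  rw [mink_self, norm_sub_sq_real, inner_smul_right, norm_smul, hz, Real.norm_eq_abs, mul_pow,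
    sq_abs, show inner ℝ (sp u) (sp z) = u 0 * z 0 by linarith]
  field_simp
  ring

lemma mink_self_nonneg_of_null {z u : Fin (n + 1) → ℝ} (hz0 : 0 < z 0) (hz : ‖sp z‖ = z 0)
    (h : mink u z = 0) : 0 ≤ mink u u := by
  rw [mink_self_eq_of_null hz0 hz h]; positivity

/-- A null vector orthogonal to a future null vector is a multiple of it. -/
lemma eq_smul_of_null {z u : Fin (n + 1) → ℝ} (hz0 : 0 < z 0) (hz : ‖sp z‖ = z 0)
    (h : mink u z = 0) (hu : mink u u = 0) : u = (u 0 / z 0) • z := by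
  rw [mink_self_eq_of_null hz0 hz h] at hu
  have h' : sp u - (u 0 / z 0) • sp z = 0 := by
    rw [← norm_eq_zero]; exact pow_eq_zero_iff (two_ne_zero) |>.1 hu
  refine ext_sp ?_ (by simpa using sub_eq_zero.1 h')
  simp [hz0.ne']

lemma mink_lift (e : Fin (n + 1) → ℝ) (y : EuclideanSpace ℝ (Fin n)) :
    mink e (lift y) = -e 0 + inner ℝ (sp e) y := by
  simp [mink_eq]

lemma lift_mem_fut {y : EuclideanSpace ℝ (Fin n)} : lift y ∈ fut n ↔ ‖y‖ < 1 := by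
  simp [fut]

lemma kleinMap_eq (x : Fin (n + 1) → ℝ) : kleinMap x = (x 0)⁻¹ • sp x := by
  ext i; simp [kleinMap, sp, div_eq_inv_mul]

lemma smul_lift_kleinMap {x : Fin (n + 1) → ℝ} (hx : x 0 ≠ 0) : x 0 • lift (kleinMap x) = x := by
  apply ext_sp
  · simp
  · rw [sp_smul, sp_lift, kleinMap_eq, smul_smul, mul_inv_cancel₀ hx, one_smul]

lemma kleinMap_smul {c : ℝ} (hc : c ≠ 0) (x : Fin (n + 1) → ℝ) :
    kleinMap (c • x) = kleinMap x := by
  ext i; simp [kleinMap, mul_div_mul_left _ _ hc]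

@[simp] lemma kleinMap_lift (y : EuclideanSpace ℝ (Fin n)) : kleinMap (lift y) = y := by
  rw [kleinMap_eq]; simp

lemma mink_lift_kleinMap {x : Fin (n + 1) → ℝ} (hx : x 0 ≠ 0) (e : Fin (n + 1) → ℝ) :
    mink e (lift (kleinMap x)) = (x 0)⁻¹ * mink e x := by
  have h := mink_smul_right (x 0) e (lift (kleinMap x))
  rw [smul_lift_kleinMap hx] at h
  rw [h, inv_mul_cancel_left₀ hx]

lemma norm_kleinMap {x : Fin (n + 1) → ℝ} (hx : 0 < x 0) : ‖kleinMap x‖ = ‖sp x‖ / x 0 := by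
  rw [kleinMap_eq, norm_smul, norm_inv, Real.norm_of_nonneg hx.le, div_eq_inv_mul]

lemma sp_ne_zero {e : Fin (n + 1) → ℝ} (he : mink e e = 1) : sp e ≠ 0 := by
  intro h
  rw [mink_self, h] at he
  simp at he
  nlinarith [sq_nonneg (e 0)]

lemma ne_zero_of_unit {e : Fin (n + 1) → ℝ} (he : mink e e = 1) : e ≠ 0 := by
  rintro rfl; simp at he

/-! ### Irredundant systems of half-spaces -/

lemma exists_irredundant {V ι : Type*} [AddCommGroup V] [Module ℝ V] [DecidableEq ι] {X : Set V}
    (hX : Convex ℝ X) (f : ι → V →ₗ[ℝ] ℝ) (I : Finset ι) {p : V} (hp : p ∈ X)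
    (hpI : ∀ k ∈ I, f k p < 0) :
    ∃ S ⊆ I, (∀ x ∈ X, (∀ k ∈ S, f k x ≤ 0) → ∀ k ∈ I, f k x ≤ 0) ∧
      ∀ j ∈ S, ∃ w ∈ X, f j w = 0 ∧ ∀ k ∈ S, k ≠ j → f k w < 0 := by
  classical
  obtain ⟨S, hS, hmin⟩ := Finset.exists_min_image
    (I.powerset.filter fun S => ∀ x ∈ X, (∀ k ∈ S, f k x ≤ 0) → ∀ k ∈ I, f k x ≤ 0)
    Finset.card ⟨I, by simp⟩
  simp only [Finset.mem_filter, Finset.mem_powerset] at hS hmin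
  refine ⟨S, hS.1, hS.2, fun j hj => ?_⟩
  have hex : ∃ x ∈ X, (∀ k ∈ S.erase j, f k x ≤ 0) ∧ 0 < f j x := by
    by_contra! hno
    have := hmin (S.erase j) ⟨(Finset.erase_subset _ _).trans hS.1, fun x hx hk =>
      hS.2 x hx fun k hkS => ?_⟩
    · have := Finset.card_erase_lt_of_mem hj
      omega
    · by_cases hkj : k = j
      · subst hkj; exact hno x hx hk
      · exact hk k (Finset.mem_erase.2 ⟨hkj, hkS⟩)
  obtain ⟨x, hx, hxk, hxj⟩ := hex
  have hpj := hpI j (hS.1 hj)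
  have hd : 0 < f j x - f j p := by linarith
  refine ⟨(f j x / (f j x - f j p)) • p + (-f j p / (f j x - f j p)) • x,
    hX hp hx (by positivity) (div_nonneg (by linarith) hd.le) (by field_simp; ring), ?_, ?_⟩
  · simp only [map_add, map_smul, smul_eq_mul]
    field_simp
    ring
  · intro k hk hkj
    have h1 := hpI k (hS.1 hk)
    have h2 := hxk k (Finset.mem_erase.2 ⟨hkj, hk⟩)
    simp only [map_add, map_smul, smul_eq_mul]
    have ha : 0 < f j x / (f j x - f j p) := by positivity
    have hb : 0 < -f j p / (f j x - f j p) := div_pos (by linarith) hd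
    nlinarith [mul_pos_of_neg_of_neg h1 (neg_neg_of_pos ha)]

open Filter Topology in
lemma eventually_of_isOpen {s : Set (Fin (n + 1) → ℝ)} (hs : IsOpen s) {w : Fin (n + 1) → ℝ}
    (hw : w ∈ s) (x : Fin (n + 1) → ℝ) : ∀ᶠ ε : ℝ in 𝓝[>] 0, w + ε • x ∈ s := by
  have hc : Continuous fun ε : ℝ => w + ε • x := by fun_prop
  have : Tendsto (fun ε : ℝ => w + ε • x) (𝓝 0) (𝓝 w) := by
    simpa using hc.tendsto 0
  exact (this.eventually (hs.mem_nhds hw)).filter_mono nhdsWithin_le_nhds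

lemma isOpen_mink_neg (e : Fin (n + 1) → ℝ) : IsOpen {x | mink e x < 0} :=
  isOpen_lt (continuous_mink e) continuous_const

/-- An irredundant system of half-spaces in hyperbolic space, right-angled in the sense that two
walls meeting along a codimension two face are orthogonal. -/
structure Chamber {ι : Type*} (e : ι → Fin (n + 1) → ℝ) : Prop where
  unit : ∀ k, mink (e k) (e k) = 1
  interior : ∃ p ∈ fut n, ∀ k, mink (e k) p < 0
  wall : ∀ k, ∃ w ∈ fut n, mink (e k) w = 0 ∧ ∀ l, l ≠ k → mink (e l) w < 0
  right_angle : ∀ i j, i ≠ j → ∀ w ∈ fut n, mink (e i) w = 0 → mink (e j) w = 0 →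
    (∀ x, mink (e i) x = 0 → mink (e j) x = 0 →
      ∃ ε : ℝ, 0 < ε ∧ w + ε • x ∈ fut n ∧ ∀ k, mink (e k) (w + ε • x) ≤ 0) → mink (e i) (e j) = 0

namespace Chamber

variable {ι : Type*} [Finite ι] {e : ι → Fin (n + 1) → ℝ}

open Filter Topology in
/-- The facet on a wall is cut out of that wall by the walls orthogonal to it. -/
lemma cut (h : Chamber e) (i : ι) {x : Fin (n + 1) → ℝ} (hx : x ∈ fut n) (hxi : mink (e i) x = 0)
    (hxk : ∀ k, mink (e i) (e k) = 0 → mink (e k) x ≤ 0) (k : ι) : mink (e k) x ≤ 0 := by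
  classical
  have := Fintype.ofFinite ι
  obtain ⟨p, hp, hpi, hpk⟩ := h.wall i
  have hconv : Convex ℝ (fut n ∩ {x | mink (e i) x = 0}) := by
    refine convex_fut.inter ?_
    intro a ha b hb s t _ _ _
    simp only [Set.mem_ofPred_eq] at ha hb ⊢
    simp [ha, hb]
  obtain ⟨S, hS, hcut, hwall⟩ := exists_irredundant hconv (fun k => minkL (e k))
    (Finset.univ.erase i) (p := p) ⟨hp, hpi⟩ (fun k hk => hpk k (Finset.ne_of_mem_erase hk))
  have horth : ∀ j ∈ S, mink (e i) (e j) = 0 := by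
    intro j hj
    have hji : j ≠ i := Finset.ne_of_mem_erase (hS hj)
    obtain ⟨w, ⟨hw, hwi⟩, hwj, hwk⟩ := hwall j hj
    refine h.right_angle i j hji.symm w hw hwi hwj fun x hxi hxj => ?_
    have hev : ∀ᶠ ε : ℝ in 𝓝[>] 0, ∀ k ∈ S.erase j, mink (e k) (w + ε • x) < 0 := by
      rw [Finset.eventually_all]
      intro k hk
      exact eventually_of_isOpen (isOpen_mink_neg (e k))
        (hwk k (Finset.mem_of_mem_erase hk) (Finset.ne_of_mem_erase hk)) x
    obtain ⟨ε, h1, h2, h3⟩ :=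
      (hev.and ((eventually_of_isOpen isOpen_fut hw x).and self_mem_nhdsWithin)).exists
    have hi0 : mink (e i) (w + ε • x) = 0 := by
      have : mink (e i) w = 0 := hwi
      simp [this, hxi]
    refine ⟨ε, h3, h2, fun k => ?_⟩
    by_cases hki : k = i
    · subst hki; exact hi0.le
    · refine hcut _ ⟨h2, hi0⟩ (fun l hl => ?_) k (Finset.mem_erase.2 ⟨hki, Finset.mem_univ _⟩)
      by_cases hlj : l = j
      · subst hlj
        have : mink (e l) w = 0 := hwj
        show mink (e l) (w + ε • x) ≤ 0
        simp [this, hxj]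
      · exact (h1 l (Finset.mem_erase.2 ⟨hlj, hl⟩)).le
  by_cases hki : k = i
  · subst hki; exact hxi.le
  · exact hcut x ⟨hx, hxi⟩ (fun l hl => hxk l (horth l hl)) k
      (Finset.mem_erase.2 ⟨hki, Finset.mem_univ _⟩)

/-- The orthogonal projection to a wall preserves the chamber. -/
lemma proj (h : Chamber e) (i : ι) {x : Fin (n + 1) → ℝ} (hx : x ∈ fut n)
    (hxk : ∀ k, mink (e k) x ≤ 0) (k : ι) :
    mink (e k) (x - mink (e i) x • e i) ≤ 0 := by
  have hneg := (mem_fut_iff.1 hx).1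
  have hu := h.unit i
  refine h.cut i (mem_fut_of_mink_neg hx ?_ ?_) ?_ ?_ k
  · simp only [mink_sub_left, mink_sub_right, mink_smul_left, mink_smul_right, hu,
      mink_comm x (e i)]
    nlinarith [sq_nonneg (mink (e i) x)]
  · simp only [mink_sub_right, mink_smul_right, mink_comm x (e i)]
    nlinarith [sq_nonneg (mink (e i) x)]
  · simp [hu]
  · intro l hl
    simpa [mink_comm (e l) (e i), hl] using hxk l

lemma gram_nonpos (h : Chamber e) {i j : ι} (hij : i ≠ j) : mink (e i) (e j) ≤ 0 := by
  obtain ⟨w, hw, hwj, hwk⟩ := h.wall j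
  have hp := h.proj i hw (fun k => by
    by_cases hk : k = j
    · subst hk; exact hwj.le
    · exact (hwk k hk).le) j
  have hi := hwk i hij
  simp only [mink_sub_right, mink_smul_right, hwj, mink_comm (e j) (e i)] at hp
  nlinarith

open Filter Topology in
/-- Two walls of a right-angled chamber are orthogonal, parallel or ultraparallel. -/
lemma gram (h : Chamber e) {i j : ι} (hij : i ≠ j) :
    mink (e i) (e j) = 0 ∨ mink (e i) (e j) ≤ -1 := by
  rw [or_iff_not_imp_right, not_le]
  intro hg
  have hg0 := h.gram_nonpos hij
  obtain ⟨p, hp, hpk⟩ := h.interior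
  set g := mink (e i) (e j) with hgdef
  have hd : 0 < 1 - g ^ 2 := by nlinarith
  have hpi := hpk i
  have hpj := hpk j
  have hpp := (mem_fut_iff.1 hp).1
  have hgj : mink (e j) (e i) = g := mink_comm _ _
  set a := (mink (e i) p - g * mink (e j) p) / (1 - g ^ 2) with ha
  set b := (mink (e j) p - g * mink (e i) p) / (1 - g ^ 2) with hb
  have ha0 : a ≤ 0 := div_nonpos_of_nonpos_of_nonneg (by nlinarith) hd.le
  have hb0 : b ≤ 0 := div_nonpos_of_nonpos_of_nonneg (by nlinarith) hd.le
  have hab1 : a + b * g = mink (e i) p := by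
    rw [ha, hb]; field_simp; ring
  have hab2 : a * g + b = mink (e j) p := by
    rw [ha, hb]; field_simp; ring
  set q := p - a • e i - b • e j with hq
  have hqi : mink (e i) q = 0 := by
    simp only [hq, mink_sub_right, mink_smul_right, h.unit i, ← hgdef]; linarith
  have hqj : mink (e j) q = 0 := by
    simp only [hq, mink_sub_right, mink_smul_right, h.unit j, hgj]; linarith
  have hpq : mink p q < 0 := by
    simp only [hq, mink_sub_right, mink_smul_right, mink_comm p (e i), mink_comm p (e j)]
    nlinarith [mul_nonneg_of_nonpos_of_nonpos ha0 hpi.le,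
      mul_nonneg_of_nonpos_of_nonpos hb0 hpj.le]
  have hqq : mink q q = mink p q := by
    have : mink (p - a • e i - b • e j) q = mink p q := by
      simp only [mink_sub_left, mink_smul_left, hqi, hqj]; ring
    exact this
  have hqf : q ∈ fut n := mem_fut_of_mink_neg hp (hqq ▸ hpq) hpq
  have hqk : ∀ k, k ≠ i → k ≠ j → mink (e k) q < 0 := by
    intro k hki hkj
    have h1 := h.gram_nonpos hki
    have h2 := h.gram_nonpos hkj
    simp only [hq, mink_sub_right, mink_smul_right]
    nlinarith [mul_nonneg_of_nonpos_of_nonpos ha0 h1, mul_nonneg_of_nonpos_of_nonpos hb0 h2,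
      hpk k]
  refine h.right_angle i j hij q hqf hqi hqj fun x hxi hxj => ?_
  have hev : ∀ᶠ ε : ℝ in 𝓝[>] 0, ∀ k, k ≠ i → k ≠ j → mink (e k) (q + ε • x) < 0 := by
    simp only [Filter.eventually_all]
    intro k hki hkj
    exact eventually_of_isOpen (isOpen_mink_neg (e k)) (hqk k hki hkj) x
  obtain ⟨ε, h1, h2, h3⟩ :=
    (hev.and ((eventually_of_isOpen isOpen_fut hqf x).and self_mem_nhdsWithin)).exists
  refine ⟨ε, h3, h2, fun k => ?_⟩
  by_cases hki : k = i
  · subst hki; simp [hqi, hxi]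
  by_cases hkj : k = j
  · subst hkj; simp [hqj, hxj]
  exact (h1 k hki hkj).le

end Chamber

/-! ### Ideal points -/

section Ideal

variable {ι : Type*} {e : ι → Fin (n + 1) → ℝ} {z : Fin (n + 1) → ℝ}

open Filter Topology in
lemma exists_tight [Finite ι] (hL : ∀ x, (∀ k, mink (e k) x ≤ 0) → ‖sp x‖ ≤ x 0)
    (hz : ‖sp z‖ = z 0) (hzk : ∀ k, mink (e k) z ≤ 0) : ∃ i, mink (e i) z = 0 := by
  by_contra! hno
  have hev : ∀ᶠ ε : ℝ in 𝓝[>] 0, ∀ k, mink (e k) (z + ε • (-lift 0)) < 0 := by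
    rw [Filter.eventually_all]
    exact fun k => eventually_of_isOpen (isOpen_mink_neg (e k))
      (lt_of_le_of_ne (hzk k) (hno k)) _
  obtain ⟨ε, h1, h2⟩ := (hev.and self_mem_nhdsWithin).exists
  have hε : 0 < ε := h2
  have h := hL _ fun k => (h1 k).le
  have hs : sp (z + ε • (-lift 0)) = sp z := by
    ext i; simp [sp, lift]
  rw [hs] at h
  simp at h
  linarith

open Filter Topology in
/-- A wall through an ideal point of a polyhedron of finite volume is non-orthogonal to another
wall through that point. -/
lemma exists_partner [Finite ι] (hL : ∀ x, (∀ k, mink (e k) x ≤ 0) → ‖sp x‖ ≤ x 0)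
    (hz : ‖sp z‖ = z 0) (hzk : ∀ k, mink (e k) z ≤ 0) {i : ι}
    (hi : mink (e i) (e i) = 1) (hiz : mink (e i) z = 0) :
    ∃ j, j ≠ i ∧ mink (e j) z = 0 ∧ mink (e i) (e j) ≠ 0 := by
  by_contra! hno
  have hev : ∀ᶠ ε : ℝ in 𝓝[>] 0, ∀ k, mink (e k) z ≠ 0 → mink (e k) (z + ε • (-e i)) < 0 := by
    simp only [Filter.eventually_all]
    exact fun k hk => eventually_of_isOpen (isOpen_mink_neg (e k))
      (lt_of_le_of_ne (hzk k) hk) _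
  obtain ⟨ε, h1, h2⟩ := (hev.and self_mem_nhdsWithin).exists
  have hε : 0 < ε := h2
  have hx : z + ε • (-e i) = z - ε • e i := by rw [smul_neg, sub_eq_add_neg]
  rw [hx] at h1
  have h := hL (z - ε • e i) fun k => by
    by_cases hk : mink (e k) z = 0
    · by_cases hki : k = i
      · subst hki; simp [hk, hi, hε.le]
      · simp [hk, mink_comm (e k) (e i), hno k hki hk]
    · exact (h1 k hk).le
  have h' : mink (z - ε • e i) (z - ε • e i) ≤ 0 := by
    rw [mink_self]; nlinarith [norm_nonneg (sp (z - ε • e i))]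
  have hzz : mink z z = 0 := by rw [mink_self, hz]; ring
  simp only [mink_sub_left, mink_sub_right, mink_smul_left, mink_smul_right, hzz, hiz,
    mink_comm z (e i), hi] at h'
  nlinarith

lemma mink_sum_right {κ : Type*} (s : Finset κ) (x : Fin (n + 1) → ℝ)
    (f : κ → Fin (n + 1) → ℝ) : mink x (∑ k ∈ s, f k) = ∑ k ∈ s, mink x (f k) :=
  map_sum (minkL x) f s

/-- At most `n - 1` pairwise orthogonal walls pass through an ideal point. -/
lemma card_orthogonal_le (hz0 : 0 < z 0) (hz : ‖sp z‖ = z 0) {p : Fin (n + 1) → ℝ}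
    (hp : p ∈ fut n) (N : Finset ι) (hunit : ∀ k ∈ N, mink (e k) (e k) = 1)
    (hNz : ∀ k ∈ N, mink (e k) z = 0)
    (horth : ∀ k ∈ N, ∀ l ∈ N, k ≠ l → mink (e k) (e l) = 0) : N.card + 2 ≤ n + 1 := by
  classical
  have hpz : mink z p ≠ 0 := by
    rw [mink_comm]; exact (mink_neg_of_fut hp hz.le hz0).ne
  have hzz : mink z z = 0 := by rw [mink_self, hz]; ring
  have hli : LinearIndependent ℝ
      (Sum.elim (fun k : N => e k) ![z, p] : N ⊕ Fin 2 → Fin (n + 1) → ℝ) := by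
    rw [Fintype.linearIndependent_iff]
    intro g hg
    rw [Fintype.sum_sum_type, Fin.sum_univ_two] at hg
    simp only [Sum.elim_inl, Sum.elim_inr, Matrix.cons_val_zero, Matrix.cons_val_one] at hg
    have hp0 : g (Sum.inr 1) = 0 := by
      have := congrArg (mink z) hg
      simp only [mink_add_right, mink_sum_right, mink_smul_right, mink_zero_right, hzz] at this
      rw [Finset.sum_eq_zero (fun k _ => by rw [mink_comm, hNz k k.2, mul_zero])] at this
      simpa [hpz] using this
    have hk0 : ∀ k : N, g (Sum.inl k) = 0 := by
      intro k
      have := congrArg (mink (e k)) hg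
      simp only [mink_add_right, mink_sum_right, mink_smul_right, mink_zero_right, hp0,
        hNz k k.2] at this
      rw [Finset.sum_eq_single k (fun l _ hl => by
        rw [horth k k.2 l l.2 (fun h => hl (Subtype.ext h.symm)), mul_zero]) (by simp),
        hunit k k.2] at this
      simpa using this
    have hz' : g (Sum.inr 0) = 0 := by
      rw [Finset.sum_eq_zero (fun k _ => by rw [hk0 k, zero_smul]), hp0, zero_smul, zero_add,
        add_zero] at hg
      have := congrFun hg 0
      simpa [hz0.ne'] using this
    rintro (k | k)
    · exact hk0 k
    · fin_cases k
      · exact hz'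
      · exact hp0
  have := hli.fintype_card_le_finrank
  simpa using this

/-- The number of walls through an ideal point orthogonal to a given wall through it. -/
lemma card_tight_le (hz0 : 0 < z 0) (hz : ‖sp z‖ = z 0) {p : Fin (n + 1) → ℝ}
    (hp : p ∈ fut n) (hunit : ∀ k, mink (e k) (e k) = 1)
    (hgram : ∀ k l, k ≠ l → mink (e k) (e l) = 0 ∨ mink (e k) (e l) ≤ -1)
    {i : ι} (hi : mink (e i) z = 0) (K : Finset ι) (hKz : ∀ k ∈ K, mink (e k) z = 0)
    (hKi : ∀ k ∈ K, mink (e i) (e k) = 0) : K.card + 4 ≤ 2 * n := by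
  classical
  have hzz : mink z z = 0 := by rw [mink_self, hz]; ring
  obtain ⟨M, hM, hmax⟩ := Finset.exists_max_image
    (K.powerset.filter fun M => ∀ k ∈ M, ∀ l ∈ M, k ≠ l → mink (e k) (e l) = 0)
    Finset.card ⟨∅, by simp⟩
  simp only [Finset.mem_filter, Finset.mem_powerset] at hM hmax
  obtain ⟨hMK, hMo⟩ := hM
  have hiM : i ∉ M := fun h => by
    have := hKi i (hMK h)
    rw [hunit] at this
    norm_num at this
  have hMcard : M.card + 3 ≤ n + 1 := by
    have := card_orthogonal_le hz0 hz hp (insert i M) (fun k _ => hunit k)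
      (fun k hk => by
        rcases Finset.mem_insert.1 hk with rfl | hk
        · exact hi
        · exact hKz k (hMK hk))
      (fun k hk l hl hkl => by
        rcases Finset.mem_insert.1 hk with rfl | hk1 <;>
          rcases Finset.mem_insert.1 hl with rfl | hl1
        · exact absurd rfl hkl
        · exact hKi l (hMK hl1)
        · rw [mink_comm]; exact hKi k (hMK hk1)
        · exact hMo k hk1 l hl1 hkl)
    rw [Finset.card_insert_of_notMem hiM] at this
    omega
  have hpartner : ∀ l ∈ K \ M, ∃ k ∈ M, ∃ c : ℝ, e l = c • z - e k := by
    intro l hl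
    obtain ⟨hlK, hlM⟩ := Finset.mem_sdiff.1 hl
    by_contra! hno
    have horth : ∀ k ∈ M, mink (e k) (e l) = 0 := by
      intro k hk
      have hkl : k ≠ l := fun h => hlM (h ▸ hk)
      refine (hgram k l hkl).resolve_right fun hle => ?_
      have hs : mink (e l + e k) z = 0 := by simp [hKz l hlK, hKz k (hMK hk)]
      have hss : mink (e l + e k) (e l + e k) = 2 + 2 * mink (e k) (e l) := by
        simp only [mink_add_left, mink_add_right, hunit, mink_comm (e l) (e k)]; ring
      have h0 := mink_self_nonneg_of_null hz0 hz hs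
      have := eq_smul_of_null hz0 hz hs (by linarith)
      exact hno k hk _ (eq_sub_of_add_eq this)
    have := hmax (insert l M) ⟨Finset.insert_subset hlK hMK, fun k hk k' hk' hkk' => by
      rcases Finset.mem_insert.1 hk with rfl | hk1 <;>
        rcases Finset.mem_insert.1 hk' with rfl | hk2
      · exact absurd rfl hkk'
      · rw [mink_comm]; exact horth k' hk2
      · exact horth k hk1
      · exact hMo k hk1 k' hk2 hkk'⟩
    rw [Finset.card_insert_of_notMem hlM] at this
    omega
  choose! f hf c hc using hpartner
  have hinj : (K \ M).card ≤ M.card := by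
    refine Finset.card_le_card_of_injOn f hf ?_
    intro l hl l' hl' hll'
    by_contra hne
    have hlm := hf l hl
    have h1 := hc l hl
    have h2 := hc l' hl'
    rw [← hll'] at h2
    have hval : mink (e l) (e l') = 1 := by
      have hfz := hKz _ (hMK hlm)
      rw [h1, h2]
      simp [hzz, mink_comm z, hfz, hunit]
    rcases hgram l l' hne with h | h <;> linarith
  have hsd := Finset.card_sdiff_add_card_eq_card hMK
  omega

end Ideal

/-! ### Hyperplanes of hyperbolic space as hyperbolic spaces -/

lemma null_of_mink_neg {w z : Fin (n + 1) → ℝ} (hw : w ∈ fut n) (hz : mink z z = 0)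
    (hwz : mink w z < 0) : 0 < z 0 ∧ ‖sp z‖ = z 0 := by
  have hsq : ‖sp z‖ ^ 2 = z 0 ^ 2 := by rw [mink_self] at hz; linarith
  have habs : ‖sp z‖ = |z 0| := by
    rw [← abs_of_nonneg (norm_nonneg (sp z))]; exact (sq_eq_sq_iff_abs_eq_abs _ _).1 hsq
  have hpos : 0 < z 0 := by
    by_contra hneg
    rw [not_lt] at hneg
    have hw0 := fut_pos hw
    change ‖sp w‖ < w 0 at hw
    have hin := neg_le_of_abs_le (abs_real_inner_le_norm (sp w) (sp z))
    rw [mink_eq] at hwz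
    rw [abs_of_nonpos hneg] at habs
    rw [habs] at hin
    nlinarith [mul_nonneg (sub_nonneg.2 hw.le) (neg_nonneg.2 hneg)]
  exact ⟨hpos, by rw [habs, abs_of_pos hpos]⟩

/-- The inclusion of Minkowski spaces appending a zero coordinate. -/
def snocZero (n : ℕ) : (Fin (n + 1) → ℝ) →ₗ[ℝ] (Fin (n + 2) → ℝ) where
  toFun x := Fin.snoc x 0
  map_add' x y := by
    funext i
    refine Fin.lastCases ?_ (fun j => ?_) i
    · simp
    · simp
  map_smul' c x := by
    funext i
    refine Fin.lastCases ?_ (fun j => ?_) i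
    · simp
    · simp

lemma mink_snocZero (x y : Fin (n + 1) → ℝ) :
    mink (snocZero n x) (snocZero n y) = mink x y := by
  have h0 : ∀ x : Fin (n + 1) → ℝ, snocZero n x 0 = x 0 := fun x =>
    Fin.snoc_castSucc (α := fun _ => ℝ) 0 x 0
  have hs : ∀ (x : Fin (n + 1) → ℝ) (i : Fin n), snocZero n x i.castSucc.succ = x i.succ := by
    intro x i
    rw [Fin.succ_castSucc]
    exact Fin.snoc_castSucc (α := fun _ => ℝ) 0 x i.succ
  have hl : ∀ x : Fin (n + 1) → ℝ, snocZero n x (Fin.last n).succ = 0 := by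
    intro x
    rw [Fin.succ_last]
    exact Fin.snoc_last (α := fun _ => ℝ) 0 x
  simp only [mink, Fin.sum_univ_castSucc, h0, hs, hl]
  simp

lemma exists_snocZero {y : Fin (n + 2) → ℝ} (hy : y (Fin.last (n + 1)) = 0) :
    ∃ x, snocZero n x = y :=
  ⟨Fin.init y, by
    show Fin.snoc (Fin.init y) 0 = y
    rw [← hy]; exact Fin.snoc_init_self y⟩

lemma mink_single_last (x : Fin (n + 2) → ℝ) :
    mink (Pi.single (Fin.last (n + 1)) 1) x = x (Fin.last (n + 1)) := by
  have h0 : (Pi.single (Fin.last (n + 1)) (1 : ℝ) : Fin (n + 2) → ℝ) 0 = 0 :=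
    Pi.single_eq_of_ne (Fin.last_pos.ne) _
  have hs : ∀ i : Fin n,
      (Pi.single (Fin.last (n + 1)) (1 : ℝ) : Fin (n + 2) → ℝ) i.castSucc.succ = 0 := by
    intro i
    rw [Fin.succ_castSucc]
    exact Pi.single_eq_of_ne (Fin.castSucc_lt_last _).ne _
  rw [mink, h0, Fin.sum_univ_castSucc, Finset.sum_eq_zero (fun i _ => by rw [hs, zero_mul]),
    Fin.succ_last, Pi.single_eq_same]
  ring

/-- The reflection in the hyperplane orthogonal to `u`. -/
def refl (u : Fin (n + 1) → ℝ) : (Fin (n + 1) → ℝ) →ₗ[ℝ] (Fin (n + 1) → ℝ) where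
  toFun x := x - (2 * mink u x / mink u u) • u
  map_add' x y := by
    simp only [mink_add_right]; module
  map_smul' c x := by
    simp only [mink_smul_right, RingHom.id_apply]; module

lemma refl_apply (u x : Fin (n + 1) → ℝ) : refl u x = x - (2 * mink u x / mink u u) • u := rfl

lemma mink_refl_refl {u : Fin (n + 1) → ℝ} (hu : mink u u ≠ 0) (x y : Fin (n + 1) → ℝ) :
    mink (refl u x) (refl u y) = mink x y := by
  simp only [refl_apply, mink_sub_left, mink_sub_right, mink_smul_left, mink_smul_right,
    mink_comm x u]
  field_simp
  ring

lemma refl_refl {u : Fin (n + 1) → ℝ} (hu : mink u u ≠ 0) (x : Fin (n + 1) → ℝ) :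
    refl u (refl u x) = x := by
  have : 2 * mink u (refl u x) / mink u u = -(2 * mink u x / mink u u) := by
    simp only [refl_apply, mink_sub_right, mink_smul_right]
    field_simp
    ring
  rw [refl_apply u (refl u x), this, refl_apply]
  module

lemma refl_mem_fut {u x : Fin (n + 1) → ℝ} (hu : 0 < mink u u) (hx : x ∈ fut n) :
    refl u x ∈ fut n := by
  have hxx := (mem_fut_iff.1 hx).1
  refine mem_fut_of_mink_neg hx (by rwa [mink_refl_refl hu.ne']) ?_
  simp only [refl_apply, mink_sub_right, mink_smul_right, mink_comm x u]
  have : 0 ≤ 2 * mink u x / mink u u * mink u x := by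
    rw [show 2 * mink u x / mink u u * mink u x = 2 * mink u x ^ 2 / mink u u by ring]
    positivity
  linarith

lemma snocZero_mem_fut {x : Fin (n + 1) → ℝ} : snocZero n x ∈ fut (n + 1) ↔ x ∈ fut n := by
  rw [mem_fut_iff, mem_fut_iff, mink_snocZero]
  have h0 : snocZero n x 0 = x 0 := Fin.snoc_castSucc (α := fun _ => ℝ) 0 x 0
  rw [h0]

/-- A hyperplane of hyperbolic space is isometric to a hyperbolic space. -/
lemma exists_isometry (e : Fin (n + 2) → ℝ) (he : mink e e = 1) :
    ∃ φ : (Fin (n + 1) → ℝ) →ₗ[ℝ] (Fin (n + 2) → ℝ),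
      (∀ x y, mink (φ x) (φ y) = mink x y) ∧ (∀ x, mink e (φ x) = 0) ∧
      (∀ y, mink e y = 0 → ∃ x, φ x = y) ∧ ∀ x, φ x ∈ fut (n + 1) ↔ x ∈ fut n := by
  set f : Fin (n + 2) → ℝ := Pi.single (Fin.last (n + 1)) 1 with hf
  have hff : mink f f = 1 := by rw [hf, mink_single_last]; simp
  obtain ⟨u, hu, c, hc, hue⟩ : ∃ u : Fin (n + 2) → ℝ, 0 < mink u u ∧
      ∃ c : ℝ, c ≠ 0 ∧ refl u e = c • f := by
    rcases le_total (mink e f) 0 with hg | hg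
    · have huu : mink (e - f) (e - f) = 2 - 2 * mink e f := by
        simp only [mink_sub_left, mink_sub_right, he, hff, mink_comm f e]; ring
      refine ⟨e - f, by rw [huu]; linarith, 1, one_ne_zero, ?_⟩
      have hne : 2 - 2 * mink e f ≠ 0 := by linarith
      have : 2 * mink (e - f) e / mink (e - f) (e - f) = 1 := by
        rw [huu, mink_sub_left, he, mink_comm f e, div_eq_one_iff_eq hne]; ring
      rw [refl_apply, this]; module
    · have huu : mink (e + f) (e + f) = 2 + 2 * mink e f := by
        simp only [mink_add_left, mink_add_right, he, hff, mink_comm f e]; ring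
      refine ⟨e + f, by rw [huu]; linarith, -1, by norm_num, ?_⟩
      have hne : 2 + 2 * mink e f ≠ 0 := by linarith
      have : 2 * mink (e + f) e / mink (e + f) (e + f) = 1 := by
        rw [huu, mink_add_left, he, mink_comm f e, div_eq_one_iff_eq hne]; ring
      rw [refl_apply, this]; module
  have horth : ∀ y, mink e y = c * refl u y (Fin.last (n + 1)) := fun y => by
    rw [← mink_refl_refl hu.ne' e y, hue, mink_smul_left, hf, mink_single_last]
  refine ⟨(refl u).comp (snocZero n), fun x y => ?_, fun x => ?_, fun y hy => ?_, fun x => ?_⟩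
  · rw [LinearMap.comp_apply, LinearMap.comp_apply, mink_refl_refl hu.ne', mink_snocZero]
  · have hl : snocZero n x (Fin.last (n + 1)) = 0 := Fin.snoc_last (α := fun _ => ℝ) 0 x
    rw [horth, LinearMap.comp_apply, refl_refl hu.ne', hl, mul_zero]
  · rw [horth] at hy
    obtain ⟨x, hx⟩ := exists_snocZero ((mul_eq_zero.1 hy).resolve_left hc)
    exact ⟨x, by rw [LinearMap.comp_apply, hx, refl_refl hu.ne']⟩
  · rw [LinearMap.comp_apply, ← snocZero_mem_fut (x := x)]
    refine ⟨fun h => ?_, refl_mem_fut hu⟩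
    simpa [refl_refl hu.ne'] using refl_mem_fut hu h

/-! ### The Klein model of a polyhedron -/

section Klein

variable {ι : Type*} {e : ι → Fin (n + 1) → ℝ}

/-- The part of the closed unit ball cut out by a system of half-spaces. -/
def region (e : ι → Fin (n + 1) → ℝ) : Set (EuclideanSpace ℝ (Fin n)) :=
  {y | ‖y‖ ≤ 1 ∧ ∀ k, mink (e k) (lift y) ≤ 0}

/-- The ideal points of a system of half-spaces. -/
def idealPts (e : ι → Fin (n + 1) → ℝ) : Set (EuclideanSpace ℝ (Fin n)) :=
  {y | ‖y‖ = 1 ∧ ∀ k, mink (e k) (lift y) ≤ 0}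

lemma continuous_mink_lift (e : Fin (n + 1) → ℝ) :
    Continuous fun y : EuclideanSpace ℝ (Fin n) => mink e (lift y) := by
  simp only [mink_lift]; fun_prop

lemma mink_lift_add (e : Fin (n + 1) → ℝ) (y x : EuclideanSpace ℝ (Fin n)) :
    mink e (lift (y + x)) = mink e (lift y) + inner ℝ (sp e) x := by
  simp only [mink_lift, inner_add_right]; ring

lemma mink_lift_combo (e : Fin (n + 1) → ℝ) (x y : EuclideanSpace ℝ (Fin n)) {a b : ℝ}
    (hab : a + b = 1) :
    mink e (lift (a • x + b • y)) = a * mink e (lift x) + b * mink e (lift y) := by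
  simp only [mink_lift, inner_add_right, inner_smul_right]
  linear_combination (e 0) * hab

lemma isClosed_region : IsClosed (region e) := by
  have : region e = {y | ‖y‖ ≤ 1} ∩ ⋂ k, {y | mink (e k) (lift y) ≤ 0} := by
    ext y; simp [region]
  rw [this]
  exact (isClosed_le continuous_norm continuous_const).inter
    (isClosed_iInter fun k => isClosed_le (continuous_mink_lift _) continuous_const)

lemma isCompact_region : IsCompact (region e) :=
  (isCompact_closedBall (0 : EuclideanSpace ℝ (Fin n)) 1).of_isClosed_subset isClosed_region
    fun y hy => by simpa using hy.1

lemma convex_region : Convex ℝ (region e) := by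
  intro x hx y hy a b ha hb hab
  refine ⟨?_, fun k => ?_⟩
  · have := convex_closedBall (0 : EuclideanSpace ℝ (Fin n)) 1 (by simpa using hx.1)
      (by simpa using hy.1) ha hb hab
    simpa using this
  · rw [mink_lift_combo _ _ _ hab]
    nlinarith [mul_nonneg ha (neg_nonneg.2 (hx.2 k)), mul_nonneg hb (neg_nonneg.2 (hy.2 k))]

lemma image_kleinMap (e : ι → Fin (n + 1) → ℝ) :
    kleinMap '' {x ∈ Hyperboloid n | ∀ i, mink (e i) x ≤ 0} =
      {y | ‖y‖ < 1 ∧ ∀ k, mink (e k) (lift y) ≤ 0} := by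
  ext y
  constructor
  · rintro ⟨x, ⟨⟨hx1, hx0⟩, hxk⟩, rfl⟩
    have hf : x ∈ fut n := mem_fut_iff.2 ⟨by rw [hx1]; norm_num, hx0⟩
    refine ⟨?_, fun k => ?_⟩
    · rw [norm_kleinMap hx0, div_lt_one hx0]; exact hf
    · rw [mink_lift_kleinMap hx0.ne']
      exact mul_nonpos_of_nonneg_of_nonpos (inv_nonneg.2 hx0.le) (hxk k)
  · rintro ⟨hy, hyk⟩
    have hneg : 0 < -mink (lift y) (lift y) := by
      have := (mem_fut_iff.1 (lift_mem_fut.2 hy)).1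
      linarith
    set r := (Real.sqrt (-mink (lift y) (lift y)))⁻¹ with hr
    have hrpos : 0 < r := inv_pos.2 (Real.sqrt_pos.2 hneg)
    refine ⟨r • lift y, ⟨⟨?_, ?_⟩, fun k => ?_⟩, ?_⟩
    · rw [mink_smul_left, mink_smul_right, ← mul_assoc, hr, ← mul_inv, Real.mul_self_sqrt hneg.le,
        inv_neg, neg_mul, inv_mul_cancel₀ (by linarith)]
    · simpa using hrpos
    · rw [mink_smul_right]
      exact mul_nonpos_of_nonneg_of_nonpos hrpos.le (hyk k)
    · rw [kleinMap_smul hrpos.ne', kleinMap_lift]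

lemma interior_nonempty_iff [Finite ι] (hunit : ∀ k, mink (e k) (e k) = 1) :
    (interior (kleinMap '' {x ∈ Hyperboloid n | ∀ i, mink (e i) x ≤ 0})).Nonempty ↔
      ∃ y : EuclideanSpace ℝ (Fin n), ‖y‖ < 1 ∧ ∀ k, mink (e k) (lift y) < 0 := by
  rw [image_kleinMap]
  constructor
  · rintro ⟨y, hy⟩
    refine ⟨y, (interior_subset hy).1, fun k => ?_⟩
    by_contra hk
    have hc : Continuous fun t : ℝ => y + t • sp (e k) := by fun_prop
    have ht : Filter.Tendsto (fun t : ℝ => y + t • sp (e k)) (nhds 0) (nhds y) := by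
      simpa using hc.tendsto 0
    obtain ⟨t, ht1, ht2⟩ := (((ht.eventually (isOpen_interior.mem_nhds hy)).filter_mono
      nhdsWithin_le_nhds).and (self_mem_nhdsWithin (s := Set.Ioi (0 : ℝ)))).exists
    have h := (interior_subset ht1).2 k
    have ht0 : 0 < t := ht2
    rw [mink_lift_add, inner_smul_right, real_inner_self_eq_norm_sq] at h
    have : 0 < ‖sp (e k)‖ := norm_pos_iff.2 (sp_ne_zero (hunit k))
    have : 0 < t * ‖sp (e k)‖ ^ 2 := by positivity
    linarith
  · rintro ⟨y, hy, hyk⟩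
    refine ⟨y, mem_interior.2
      ⟨{y | ‖y‖ < 1} ∩ ⋂ k, {y | mink (e k) (lift y) < 0}, ?_, ?_, ⟨hy, by simpa using hyk⟩⟩⟩
    · rintro x ⟨hx, hxk⟩
      exact ⟨hx, fun k => le_of_lt (Set.mem_iInter.1 hxk k)⟩
    · exact (isOpen_lt continuous_norm continuous_const).inter
        (isOpen_iInter_of_finite fun k => isOpen_lt (continuous_mink_lift _) continuous_const)

lemma mem_interior_region [Finite ι] {y : EuclideanSpace ℝ (Fin n)} (hy : ‖y‖ < 1)
    (hyk : ∀ k, mink (e k) (lift y) < 0) : y ∈ interior (region e) := by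
  refine mem_interior.2
    ⟨{y | ‖y‖ < 1} ∩ ⋂ k, {y | mink (e k) (lift y) < 0}, ?_, ?_, ⟨hy, by simpa using hyk⟩⟩
  · rintro x ⟨hx, hxk⟩
    exact ⟨le_of_lt hx, fun k => le_of_lt (Set.mem_iInter.1 hxk k)⟩
  · exact (isOpen_lt continuous_norm continuous_const).inter
      (isOpen_iInter_of_finite fun k => isOpen_lt (continuous_mink_lift _) continuous_const)

lemma exists_interior (P : HypPolyhedron n) :
    ∃ y : EuclideanSpace ℝ (Fin n), ‖y‖ < 1 ∧ ∀ k, mink (P.e k) (lift y) < 0 :=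
  (interior_nonempty_iff P.unit).1 P.nonempty_int

lemma cl_eq_region (P : HypPolyhedron n) : P.cl = region P.e := by
  have himg : kleinMap '' P.carrier = {y | ‖y‖ < 1 ∧ ∀ k, mink (P.e k) (lift y) ≤ 0} :=
    image_kleinMap P.e
  rw [HypPolyhedron.cl, himg]
  refine Set.Subset.antisymm
    (closure_minimal (fun y hy => ⟨hy.1.le, hy.2⟩) isClosed_region) fun y hy => ?_
  obtain ⟨p, hp, hpk⟩ := exists_interior P
  have hc : Continuous fun t : ℝ => (1 - t) • y + t • p := by fun_prop
  have ht : Filter.Tendsto (fun t : ℝ => (1 - t) • y + t • p) (nhdsWithin 0 (Set.Ioi 0))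
      (nhds y) := by
    have := hc.tendsto 0
    simp only [sub_zero, one_smul, zero_smul, add_zero] at this
    exact this.mono_left nhdsWithin_le_nhds
  refine mem_closure_of_tendsto ht ?_
  filter_upwards [Ioo_mem_nhdsGT (zero_lt_one' ℝ)] with t ht
  refine ⟨?_, fun k => ?_⟩
  · have h := norm_add_le ((1 - t) • y) (t • p)
    rw [norm_smul, norm_smul, Real.norm_of_nonneg (by linarith [ht.2]),
      Real.norm_of_nonneg ht.1.le] at h
    nlinarith [ht.1, ht.2, hy.1, mul_lt_mul_of_pos_left hp ht.1,
      mul_le_mul_of_nonneg_left hy.1 (sub_nonneg.2 ht.2.le)]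
  · rw [mink_lift_combo _ _ _ (by ring)]
    nlinarith [ht.1, ht.2, mul_nonneg (sub_nonneg.2 ht.2.le) (neg_nonneg.2 (hy.2 k)),
      mul_nonneg ht.1.le (neg_nonneg.2 (hpk k).le)]

lemma mem_verts_of_norm_eq_one {P : HypPolyhedron n} {y : EuclideanSpace ℝ (Fin n)}
    (hy : y ∈ P.cl) (h1 : ‖y‖ = 1) : y ∈ P.verts := by
  intro _
  refine ⟨innerSL ℝ y, ?_⟩
  have hyy : inner ℝ y y = (1 : ℝ) := by rw [real_inner_self_eq_norm_sq, h1]; norm_num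
  have hle : ∀ x ∈ P.cl, inner ℝ y x ≤ (1 : ℝ) := fun x hx => by
    rw [cl_eq_region] at hx
    have := real_inner_le_norm y x
    rw [h1, one_mul] at this
    exact this.trans hx.1
  ext x
  simp only [Set.mem_singleton_iff, innerSL_apply_apply]
  constructor
  · rintro rfl
    exact ⟨hy, fun x hx => by rw [hyy]; exact hle x hx⟩
  · rintro ⟨hx, hmax⟩
    have h := hmax y hy
    rw [hyy] at h
    rw [cl_eq_region] at hx
    have hsq : ‖y - x‖ ^ 2 ≤ 0 := by
      rw [norm_sub_sq_real, h1]
      nlinarith [hx.1, norm_nonneg x]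
    have : ‖y - x‖ = 0 := by nlinarith [norm_nonneg (y - x)]
    exact (sub_eq_zero.1 (norm_eq_zero.1 this)).symm

lemma verts_subset_cl (P : HypPolyhedron n) : P.verts ⊆ P.cl := fun v hv => by
  have hv' : IsExposed ℝ P.cl {v} := hv
  exact hv'.subset rfl

lemma idealVerts_eq (P : HypPolyhedron n) : P.idealVerts = idealPts P.e := by
  ext y
  constructor
  · rintro ⟨hv, h1⟩
    have := verts_subset_cl P hv
    rw [cl_eq_region] at this
    exact ⟨h1, this.2⟩
  · rintro ⟨h1, hk⟩
    exact ⟨mem_verts_of_norm_eq_one (by rw [cl_eq_region]; exact ⟨h1.le, hk⟩) h1, h1⟩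

lemma idealPts_infinite [Finite ι] (hn : 2 ≤ n) {y : EuclideanSpace ℝ (Fin n)} (hy : ‖y‖ = 1)
    (hyk : ∀ k, mink (e k) (lift y) < 0) : (idealPts e).Infinite := by
  have hpre : IsPreconnected (Metric.sphere (0 : EuclideanSpace ℝ (Fin n)) 1) :=
    isPreconnected_sphere (by
      rw [← Module.finrank_eq_rank, finrank_euclideanSpace_fin]; exact_mod_cast hn) _ _
  have hys : y ∈ Metric.sphere (0 : EuclideanSpace ℝ (Fin n)) 1 := by simpa using hy
  have hnt : (Metric.sphere (0 : EuclideanSpace ℝ (Fin n)) 1).Nontrivial := by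
    refine ⟨y, hys, -y, by simpa using hy, fun h => ?_⟩
    have h2 : (2 : ℝ) • y = 0 := by rw [two_smul]; nth_rewrite 2 [h]; simp
    have : y = 0 := by simpa using h2
    rw [this] at hy
    simp at hy
  have hacc := hpre.preperfect_of_nontrivial hnt y hys
  have hU : (⋂ k, {y | mink (e k) (lift y) < 0}) ∈ nhds y :=
    (isOpen_iInter_of_finite fun k =>
      isOpen_lt (continuous_mink_lift _) continuous_const).mem_nhds (by simpa using hyk)
  have hinf := accPt_iff_frequently.1 hacc
  intro hfin
  have hfin' : (idealPts e \ {y}).Finite := hfin.subset Set.sdiff_subset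
  have hV : (idealPts e \ {y})ᶜ ∈ nhds y := hfin'.isClosed.isOpen_compl.mem_nhds (by simp)
  obtain ⟨x, ⟨hxy, hxs⟩, hxU, hxV⟩ := (hinf.and_eventually (Filter.inter_mem hU hV)).exists
  exact hxV ⟨⟨by simpa using hxs, fun k => le_of_lt (Set.mem_iInter.1 hxU k)⟩, hxy⟩

/-- If there are only finitely many ideal points then the polyhedral cone is contained in the
closed future cone. -/
lemma cone_subset_of_finite [Finite ι] (hn : 2 ≤ n) (hfin : (idealPts e).Finite)
    {p : Fin (n + 1) → ℝ} (hp : p ∈ fut n) (hpk : ∀ k, mink (e k) p < 0)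
    (x : Fin (n + 1) → ℝ) (hx : ∀ k, mink (e k) x ≤ 0) : ‖sp x‖ ≤ x 0 := by
  by_contra hlt
  rw [not_le] at hlt
  set c : ℝ → Fin (n + 1) → ℝ := fun t => (1 - t) • p + t • x with hc
  have hcont : ContinuousOn (fun t => ‖sp (c t)‖ - c t 0) (Set.Icc 0 1) := by
    have : Continuous c := by fun_prop
    exact ((continuous_sp.comp this).norm.sub ((continuous_apply 0).comp this)).continuousOn
  have h01 : (0 : ℝ) ∈ Set.Icc (‖sp (c 0)‖ - c 0 0) (‖sp (c 1)‖ - c 1 0) := by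
    have : ‖sp p‖ < p 0 := hp
    simp only [hc, sub_zero, one_smul, zero_smul, add_zero, sub_self, zero_add]
    exact ⟨by linarith, by linarith⟩
  obtain ⟨t, ht, ht0⟩ := intermediate_value_Icc zero_le_one hcont h01
  have htz : ‖sp (c t)‖ = c t 0 := sub_eq_zero.1 ht0
  have ht1 : t < 1 := lt_of_le_of_ne ht.2 fun h => by
    subst h
    simp [hc] at htz
    linarith
  have hzk : ∀ k, mink (e k) (c t) < 0 := fun k => by
    simp only [hc, mink_add_right, mink_smul_right]
    nlinarith [mul_pos_of_neg_of_neg (neg_neg_of_pos (sub_pos.2 ht1)) (hpk k),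
      mul_nonneg ht.1 (neg_nonneg.2 (hx k))]
  rcases (htz ▸ norm_nonneg _ : 0 ≤ c t 0).eq_or_lt with hz0 | hz0
  · have hz : c t = 0 := ext_sp (by simpa using hz0.symm)
      (by rw [sp_zero, ← norm_eq_zero, htz, ← hz0])
    have hempty : IsEmpty ι := ⟨fun k => by simpa [hz] using hzk k⟩
    have : Nontrivial (EuclideanSpace ℝ (Fin n)) := by
      refine Module.nontrivial_of_finrank_pos (R := ℝ) ?_
      rw [finrank_euclideanSpace_fin]; omega
    obtain ⟨y, hy⟩ := exists_norm_eq (EuclideanSpace ℝ (Fin n)) zero_le_one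
    exact idealPts_infinite hn hy (fun k => hempty.elim k) hfin
  · refine idealPts_infinite (e := e) hn (y := kleinMap (c t)) ?_ (fun k => ?_) hfin
    · rw [norm_kleinMap hz0, htz, div_self hz0.ne']
    · rw [mink_lift_kleinMap hz0.ne']
      exact mul_neg_of_pos_of_neg (inv_pos.2 hz0) (hzk k)

end Klein

/-! ### Finite volume and faces -/

section Faces

lemma finiteVolume_of_cone_subset (P : HypPolyhedron n)
    (hL : ∀ x, (∀ k, mink (P.e k) x ≤ 0) → ‖sp x‖ ≤ x 0) : P.FiniteVolume := by
  classical
  have hreg : P.cl = {y | ∀ k, mink (P.e k) (lift y) ≤ 0} := by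
    rw [cl_eq_region]
    ext y
    exact ⟨fun h => h.2, fun h => ⟨by simpa using hL _ h, h⟩⟩
  have htight : ∀ v ∈ P.cl.extremePoints ℝ, ∀ y ∈ P.cl,
      (∀ k, mink (P.e k) (lift v) = 0 → mink (P.e k) (lift y) = 0) → y = v := by
    intro v hv y hy hk
    have hvk : ∀ k, mink (P.e k) (lift v) ≤ 0 := by simpa [hreg] using hv.1
    have hev : ∀ᶠ t : ℝ in nhdsWithin 0 (Set.Ioi 0), ∀ k, mink (P.e k) (lift v) ≠ 0 →
        mink (P.e k) (lift (v + t • (v - y))) < 0 := by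
      simp only [Filter.eventually_all]
      intro k hne
      have hc : Continuous fun t : ℝ => mink (P.e k) (lift (v + t • (v - y))) :=
        (continuous_mink_lift _).comp (by fun_prop)
      have ht : Filter.Tendsto (fun t : ℝ => mink (P.e k) (lift (v + t • (v - y))))
          (nhds 0) (nhds (mink (P.e k) (lift v))) := by simpa using hc.tendsto 0
      exact (ht.eventually (gt_mem_nhds (lt_of_le_of_ne (hvk k) hne))).filter_mono
        nhdsWithin_le_nhds
    obtain ⟨t, ht, ht0⟩ := (hev.and self_mem_nhdsWithin).exists
    have htpos : 0 < t := ht0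
    have hx : v + t • (v - y) ∈ P.cl := by
      rw [hreg]
      intro k
      by_cases h0 : mink (P.e k) (lift v) = 0
      · have h1 := hk k h0
        rw [mink_lift] at h0 h1
        rw [mink_lift_add, inner_smul_right, inner_sub_right, mink_lift,
          show inner ℝ (sp (P.e k)) v - inner ℝ (sp (P.e k)) y = 0 by linarith]
        linarith
      · exact (ht k h0).le
    refine hv.2 hy hx ⟨t / (1 + t), 1 / (1 + t), by positivity, by positivity, by field_simp; ring, ?_⟩
    have : (1 + t) ≠ 0 := by positivity
    rw [← sub_eq_zero]
    have h2 : (t / (1 + t)) • y + (1 / (1 + t)) • (v + t • (v - y)) - v =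
        ((t / (1 + t)) - (1 / (1 + t)) * t) • y + ((1 / (1 + t)) * (1 + t) - 1) • v := by module
    rw [h2, show t / (1 + t) - 1 / (1 + t) * t = 0 by ring,
      show 1 / (1 + t) * (1 + t) - 1 = 0 by field_simp; ring, zero_smul, zero_smul, add_zero]
  have hverts : P.verts = P.cl.extremePoints ℝ := by
    ext v
    constructor
    · intro hv
      exact isExtreme_singleton.1 (IsExposed.isExtreme (𝕜 := ℝ) hv)
    · intro hv _
      refine ⟨innerSL ℝ (∑ k ∈ Finset.univ.filter fun k => mink (P.e k) (lift v) = 0,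
        sp (P.e k)), ?_⟩
      have hval : ∀ y, inner ℝ (∑ k ∈ Finset.univ.filter fun k => mink (P.e k) (lift v) = 0,
          sp (P.e k)) y = ∑ k ∈ Finset.univ.filter fun k => mink (P.e k) (lift v) = 0,
          (mink (P.e k) (lift y) + P.e k 0) := fun y => by
        rw [sum_inner]
        exact Finset.sum_congr rfl fun k _ => by rw [mink_lift]; ring
      ext y
      simp only [Set.mem_singleton_iff, innerSL_apply_apply]
      constructor
      · rintro rfl
        refine ⟨hv.1, fun x hx => ?_⟩
        rw [hval, hval]
        refine Finset.sum_le_sum fun k hk => ?_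
        rw [(Finset.mem_filter.1 hk).2]
        have : ∀ k, mink (P.e k) (lift x) ≤ 0 := by simpa [hreg] using hx
        linarith [this k]
      · rintro ⟨hy, hmax⟩
        have hyk : ∀ k, mink (P.e k) (lift y) ≤ 0 := by simpa [hreg] using hy
        refine htight v hv y hy fun k hk => le_antisymm (hyk k) ?_
        have hm := hmax v hv.1
        rw [hval, hval] at hm
        by_contra hlt
        rw [not_le] at hlt
        refine absurd hm (not_le.2 (Finset.sum_lt_sum (fun l hl => ?_) ⟨k, by simpa using hk, ?_⟩))
        · rw [(Finset.mem_filter.1 hl).2]; linarith [hyk l]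
        · rw [hk]; linarith
  have hfin : P.verts.Finite := by
    rw [hverts]
    refine Set.Finite.of_injOn (f := fun v => Finset.univ.filter fun k =>
      mink (P.e k) (lift v) = 0) (t := Set.univ) (fun _ _ => Set.mem_univ _) ?_ Set.finite_univ
    intro v hv w hw hvw
    refine htight w hw v hv.1 fun k hk => ?_
    have : k ∈ Finset.univ.filter fun k => mink (P.e k) (lift v) = 0 := by
      simp only at hvw
      rw [hvw]; simpa using hk
    simpa using this
  refine ⟨hfin, ?_⟩
  have hcomp : IsCompact P.cl := by rw [cl_eq_region]; exact isCompact_region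
  have hconv : Convex ℝ P.cl := by rw [cl_eq_region]; exact convex_region
  have hkm := closure_convexHull_extremePoints hcomp hconv
  rw [← hverts, (hfin.isClosed_convexHull ℝ).closure_eq] at hkm
  exact hkm.symm

lemma norm_midpoint_lt {x y : EuclideanSpace ℝ (Fin n)} (hx : ‖x‖ ≤ 1) (hy : ‖y‖ ≤ 1)
    (hxy : x ≠ y) : ‖(2⁻¹ : ℝ) • x + (2⁻¹ : ℝ) • y‖ < 1 :=
  norm_combo_lt_of_ne hx hy hxy (by norm_num) (by norm_num) (by norm_num)

lemma exists_ne_of_sdim_pos {F : Set (EuclideanSpace ℝ (Fin n))} (hF : 0 < sdim F) :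
    ∃ x ∈ F, ∃ y ∈ F, x ≠ y := by
  by_contra! h
  have hs : F.Subsingleton := fun x hx y hy => h x hx y hy
  rw [sdim, vectorSpan_of_subsingleton ℝ hs, finrank_bot] at hF
  exact hF.false

/-- A system whose Gram matrix has off-diagonal entries `0` or at most `-1` is right-angled. -/
lemma isRightAngled_of_gram (P : HypPolyhedron n) (hn : 3 ≤ n)
    (hgram : ∀ i j, i ≠ j → mink (P.e i) (P.e j) = 0 ∨ mink (P.e i) (P.e j) ≤ -1) :
    P.IsRightAngled := by
  rintro i j hij ⟨F, ⟨hexp, hne, hdim⟩, hFi, hFj⟩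
  refine (hgram i j hij).resolve_right fun hle => ?_
  obtain ⟨x, hx, y, hy, hxy⟩ := exists_ne_of_sdim_pos (F := F) (by omega)
  have hconv : Convex ℝ F := hexp.convex (by rw [cl_eq_region]; exact convex_region)
  have hw : (2⁻¹ : ℝ) • x + (2⁻¹ : ℝ) • y ∈ F :=
    hconv hx hy (by norm_num) (by norm_num) (by norm_num)
  have hxc := hexp.subset hx
  have hyc := hexp.subset hy
  have hwc := hexp.subset hw
  rw [cl_eq_region] at hxc hyc hwc
  have hlt := norm_midpoint_lt hxc.1 hyc.1 hxy
  set w := (2⁻¹ : ℝ) • x + (2⁻¹ : ℝ) • y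
  have himg : kleinMap '' P.carrier = {y | ‖y‖ < 1 ∧ ∀ k, mink (P.e k) (lift y) ≤ 0} :=
    image_kleinMap P.e
  have hmem : w ∈ kleinMap '' P.carrier := by rw [himg]; exact ⟨hlt, hwc.2⟩
  obtain ⟨u, hu, huw⟩ := hmem
  have hi := hFi u hu (by rw [huw]; exact hw)
  have hj := hFj u hu (by rw [huw]; exact hw)
  have huf : u ∈ fut n := mem_fut_iff.2 ⟨by rw [hu.1.1]; norm_num, hu.1.2⟩
  have hnorm : mink (P.e i + P.e j) (P.e i + P.e j) = 2 + 2 * mink (P.e i) (P.e j) := by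
    simp only [mink_add_left, mink_add_right, P.unit, mink_comm (P.e j) (P.e i)]; ring
  obtain ⟨p, _, hpk⟩ := exists_interior P
  have hne0 : P.e i + P.e j ≠ 0 := fun h => by
    have h0 : mink (P.e i + P.e j) (lift p) = 0 := by rw [h, mink_zero_left]
    rw [mink_add_left] at h0
    linarith [hpk i, hpk j]
  have := mink_self_pos huf hne0 (by rw [mink_add_left, hi, hj, add_zero])
  linarith

/-- Facets lie on the given hyperplanes. -/
lemma exists_wall_of_facet (P : HypPolyhedron n) (hn : 2 ≤ n)
    {F : Set (EuclideanSpace ℝ (Fin n))} (hF : F ∈ P.faces (n - 1)) :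
    ∃ k, F = {y ∈ P.cl | mink (P.e k) (lift y) = 0} := by
  classical
  obtain ⟨hexp, hne, hdim⟩ := hF
  have hconvcl : Convex ℝ P.cl := by rw [cl_eq_region]; exact convex_region
  have hconv : Convex ℝ F := hexp.convex hconvcl
  obtain ⟨l, hl⟩ := hexp hne
  have hFcl : ∀ y ∈ F, ‖y‖ ≤ 1 ∧ ∀ k, mink (P.e k) (lift y) ≤ 0 := fun y hy => by
    have := hexp.subset hy
    rwa [cl_eq_region] at this
  have hlconst : ∀ x ∈ F, ∀ y ∈ F, l x = l y := fun x hx y hy => by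
    rw [hl] at hx hy
    exact le_antisymm (hy.2 x hx.1) (hx.2 y hy.1)
  have hl0 : (l : EuclideanSpace ℝ (Fin n) →ₗ[ℝ] ℝ) ≠ 0 := by
    intro h0
    have h0' : ∀ x, l x = 0 := fun x => LinearMap.congr_fun h0 x
    have hFc : F = P.cl := by
      rw [hl]; ext x; simp [h0']
    obtain ⟨p, hp, hpk⟩ := exists_interior P
    have hFint : (interior F).Nonempty := ⟨p, by
      rw [hFc, cl_eq_region]; exact mem_interior_region hp hpk⟩
    have hspan := hconv.interior_nonempty_iff_affineSpan_eq_top.1 hFint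
    rw [sdim, ← direction_affineSpan, hspan, AffineSubspace.direction_top, finrank_top,
      finrank_euclideanSpace_fin] at hdim
    omega
  have hker : ∀ f : EuclideanSpace ℝ (Fin n) →ₗ[ℝ] ℝ, f ≠ 0 → (∀ x ∈ F, ∀ y ∈ F, f x = f y) →
      vectorSpan ℝ F = LinearMap.ker f := by
    intro f hf hconst
    have hle : vectorSpan ℝ F ≤ LinearMap.ker f := by
      rw [vectorSpan_def, Submodule.span_le]
      rintro _ ⟨x, hx, y, hy, rfl⟩
      simp [hconst x hx y hy]
    refine Submodule.eq_of_le_of_finrank_eq hle ?_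
    have h1 := f.finrank_range_add_finrank_ker
    rw [LinearMap.range_eq_top.2 (LinearMap.surjective hf), finrank_top, Module.finrank_self,
      finrank_euclideanSpace_fin] at h1
    have h2 : Module.finrank ℝ (vectorSpan ℝ F) = n - 1 := hdim
    omega
  have hwall : ∃ k, ∀ y ∈ F, mink (P.e k) (lift y) = 0 := by
    by_contra! hno
    choose g hgF hg using hno
    obtain ⟨x, hx, y, hy, hxy⟩ := exists_ne_of_sdim_pos (F := F) (by omega)
    set q := (2⁻¹ : ℝ) • x + (2⁻¹ : ℝ) • y with hq
    have hqF : q ∈ F := hconv hx hy (by norm_num) (by norm_num) (by norm_num)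
    have hq1 : ‖q‖ < 1 := norm_midpoint_lt (hFcl x hx).1 (hFcl y hy).1 hxy
    have hind : ∀ s : Finset (Fin P.m), ∃ p ∈ F, ‖p‖ < 1 ∧ ∀ k ∈ s, mink (P.e k) (lift p) < 0 := by
      intro s
      induction s using Finset.induction_on with
      | empty => exact ⟨q, hqF, hq1, by simp⟩
      | insert k s _ ih =>
        obtain ⟨p, hpF, hp1, hpk⟩ := ih
        refine ⟨(2⁻¹ : ℝ) • p + (2⁻¹ : ℝ) • g k,
          hconv hpF (hgF k) (by norm_num) (by norm_num) (by norm_num), ?_, fun j hj => ?_⟩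
        · have h := norm_add_le ((2⁻¹ : ℝ) • p) ((2⁻¹ : ℝ) • g k)
          rw [norm_smul, norm_smul, Real.norm_of_nonneg (by norm_num)] at h
          linarith [(hFcl _ (hgF k)).1]
        · rw [mink_lift_combo _ _ _ (by norm_num)]
          have h1 := (hFcl p hpF).2 j
          have h2 := (hFcl _ (hgF k)).2 j
          rcases Finset.mem_insert.1 hj with rfl | hj
          · have := lt_of_le_of_ne h2 (hg j)
            linarith
          · linarith [hpk j hj]
    obtain ⟨p, hpF, hp1, hpk⟩ := hind Finset.univ
    have hpint : p ∈ interior P.cl := by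
      rw [cl_eq_region]; exact mem_interior_region hp1 (fun k => hpk k (Finset.mem_univ k))
    refine hl0 (LinearMap.ext fun v => ?_)
    have hpmax : ∀ y ∈ P.cl, l y ≤ l p := by
      rw [hl] at hpF; exact hpF.2
    have hmax : IsLocalMax l p :=
      Filter.mem_of_superset (mem_interior_iff_mem_nhds.1 hpint) hpmax
    have := hmax.hasFDerivAt_eq_zero l.hasFDerivAt
    simp [this]
  obtain ⟨k, hk⟩ := hwall
  refine ⟨k, Set.Subset.antisymm (fun y hy => ⟨hexp.subset hy, hk y hy⟩) ?_⟩
  rintro y ⟨hy, hyk⟩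
  have hf0 : (innerSL ℝ (sp (P.e k)) : EuclideanSpace ℝ (Fin n) →ₗ[ℝ] ℝ) ≠ 0 := fun h => by
    have := LinearMap.congr_fun h (sp (P.e k))
    simp at this
    exact sp_ne_zero (P.unit k) this
  have hval : ∀ x, mink (P.e k) (lift x) = 0 → inner ℝ (sp (P.e k)) x = P.e k 0 := fun x hx => by
    rw [mink_lift] at hx; linarith
  have h1 := hker _ hl0 hlconst
  have h2 := hker _ hf0 (fun x hx y hy => by
    show inner ℝ (sp (P.e k)) x = inner ℝ (sp (P.e k)) y
    rw [hval x (hk x hx), hval y (hk y hy)])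
  obtain ⟨p, hp⟩ := hne
  have hmem : y - p ∈ LinearMap.ker (l : EuclideanSpace ℝ (Fin n) →ₗ[ℝ] ℝ) := by
    rw [← h1, h2, LinearMap.mem_ker]
    show inner ℝ (sp (P.e k)) (y - p) = 0
    rw [inner_sub_right, hval y hyk, hval p (hk p hp), sub_self]
  have hly : l y = l p := by
    rw [LinearMap.mem_ker] at hmem
    have : l (y - p) = 0 := hmem
    rw [map_sub] at this
    linarith
  rw [hl] at hp ⊢
  exact ⟨hy, fun x hx => by rw [hly]; exact hp.2 x hx⟩

end Faces

/-! ### Faces cut out by supporting hyperplanes, and irredundant subsystems -/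

section Tight

lemma linearIndependent_sp {κ : Type*} [Fintype κ] {u : κ → Fin (n + 1) → ℝ}
    (hu : LinearIndependent ℝ u) {w : Fin (n + 1) → ℝ} (hw : w ∈ fut n)
    (huw : ∀ k, mink (u k) w = 0) : LinearIndependent ℝ fun k => sp (u k) := by
  rw [Fintype.linearIndependent_iff] at hu ⊢
  intro g hg
  refine hu g (ext_sp ?_ ?_)
  · have h1 : mink w (∑ k, g k • u k) = 0 := by
      rw [mink_sum_right]
      exact Finset.sum_eq_zero fun k _ => by rw [mink_smul_right, mink_comm, huw, mul_zero]
    have h2 : sp (∑ k, g k • u k) = 0 := by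
      rw [← hg]
      exact map_sum (⟨⟨sp, sp_add⟩, sp_smul⟩ :
        (Fin (n + 1) → ℝ) →ₗ[ℝ] EuclideanSpace ℝ (Fin n)) _ _
    rw [mink_eq, h2, inner_zero_right, add_zero, neg_eq_zero] at h1
    exact (mul_eq_zero.1 h1).resolve_left (fut_pos hw).ne'
  · rw [sp_zero, ← hg]
    exact map_sum (⟨⟨sp, sp_add⟩, sp_smul⟩ :
      (Fin (n + 1) → ℝ) →ₗ[ℝ] EuclideanSpace ℝ (Fin n)) _ _

/-- Independent supporting hyperplanes cut out a face of the expected dimension, provided they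
meet in a point around which the polyhedron fills their intersection. -/
lemma mem_faces_of_tight (P : HypPolyhedron n) {κ : Type*} [Fintype κ]
    {u : κ → Fin (n + 1) → ℝ} (hu : LinearIndependent ℝ u)
    (hle : ∀ k, ∀ y ∈ P.cl, mink (u k) (lift y) ≤ 0) {w : Fin (n + 1) → ℝ} (hw : w ∈ fut n)
    (huw : ∀ k, mink (u k) w = 0)
    (hloc : ∀ x, (∀ k, mink (u k) x = 0) →
      ∃ ε : ℝ, 0 < ε ∧ w + ε • x ∈ fut n ∧ ∀ k, mink (P.e k) (w + ε • x) ≤ 0) :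
    {y ∈ P.cl | ∀ k, mink (u k) (lift y) = 0} ∈ P.faces (n - Fintype.card κ) := by
  set F := {y ∈ P.cl | ∀ k, mink (u k) (lift y) = 0} with hFdef
  have hw0 := fut_pos hw
  have hklein : ∀ x ∈ fut n, (∀ k, mink (P.e k) x ≤ 0) → (∀ k, mink (u k) x = 0) →
      kleinMap x ∈ F := by
    intro x hx hxe hxu
    have hx0 := fut_pos hx
    refine ⟨?_, fun k => by rw [mink_lift_kleinMap hx0.ne', hxu, mul_zero]⟩
    rw [cl_eq_region]
    refine ⟨?_, fun k => ?_⟩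
    · rw [norm_kleinMap hx0, div_le_one hx0]
      exact le_of_lt hx
    · rw [mink_lift_kleinMap hx0.ne']
      exact mul_nonpos_of_nonneg_of_nonpos (inv_nonneg.2 hx0.le) (hxe k)
  have hwF : kleinMap w ∈ F := by
    obtain ⟨ε, _, _, h⟩ := hloc 0 (fun k => mink_zero_right _)
    exact hklein w hw (by simpa using h) huw
  have hval : ∀ y, inner ℝ (∑ k, sp (u k)) y = ∑ k, (mink (u k) (lift y) + u k 0) := fun y => by
    rw [sum_inner]
    exact Finset.sum_congr rfl fun k _ => by rw [mink_lift]; ring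
  refine ⟨fun _ => ⟨innerSL ℝ (∑ k, sp (u k)), ?_⟩, ⟨_, hwF⟩, ?_⟩
  · ext y
    simp only [innerSL_apply_apply]
    constructor
    · rintro ⟨hy, hyk⟩
      refine ⟨hy, fun x hx => ?_⟩
      rw [hval, hval]
      refine Finset.sum_le_sum fun k _ => ?_
      rw [hyk]
      linarith [hle k x hx]
    · rintro ⟨hy, hmax⟩
      refine ⟨hy, fun k => le_antisymm (hle k y hy) ?_⟩
      have hm := hmax _ hwF.1
      rw [hval, hval] at hm
      by_contra hlt
      rw [not_le] at hlt
      refine absurd hm (not_le.2 (Finset.sum_lt_sum (fun l _ => ?_) ⟨k, Finset.mem_univ k, ?_⟩))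
      · rw [hwF.2]; linarith [hle l y hy]
      · rw [hwF.2]; linarith
  · have hspan : vectorSpan ℝ F = (Submodule.span ℝ (Set.range fun k => sp (u k)))ᗮ := by
      apply le_antisymm
      · rw [vectorSpan_def, Submodule.span_le]
        rintro _ ⟨x, hx, y, hy, rfl⟩
        rw [SetLike.mem_coe, ← Submodule.span_singleton_le_iff_mem,
          Submodule.le_orthogonal_iff_le_orthogonal, Submodule.span_le]
        rintro _ ⟨k, rfl⟩
        rw [SetLike.mem_coe, Submodule.mem_orthogonal_singleton_iff_inner_left]
        have h1 := hx.2 k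
        have h2 := hy.2 k
        rw [mink_lift] at h1 h2
        change inner ℝ (sp (u k)) (x - y) = 0
        rw [inner_sub_right]
        linarith
      · intro x hx
        have hxk : ∀ k, inner ℝ (sp (u k)) x = 0 := fun k =>
          (Submodule.mem_orthogonal _ _).1 hx _ (Submodule.subset_span ⟨k, rfl⟩)
        have hx' : ∀ k, mink (u k) (lift x - lift 0) = 0 := fun k => by
          rw [mink_sub_right, mink_lift, mink_lift, hxk, inner_zero_right, sub_self]
        obtain ⟨ε, hε, hf, hk⟩ := hloc _ hx'
        have hF := hklein _ hf hk (fun k => by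
          rw [mink_add_right, mink_smul_right, huw, hx', mul_zero, add_zero])
        have hdiff : kleinMap (w + ε • (lift x - lift 0)) - kleinMap w = ((w 0)⁻¹ * ε) • x := by
          rw [kleinMap_eq, kleinMap_eq, ← sub_eq_zero]
          simp [smul_add, smul_smul]
        have := vsub_mem_vectorSpan ℝ hF hwF
        rw [vsub_eq_sub, hdiff] at this
        exact (Submodule.smul_mem_iff _ (by positivity)).1 this
    have h1 := Submodule.finrank_add_finrank_orthogonal
      (Submodule.span ℝ (Set.range fun k => sp (u k)))
    rw [finrank_span_eq_card (linearIndependent_sp hu hw huw), finrank_euclideanSpace_fin] at h1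
    rw [sdim, hspan]
    omega

/-- A polyhedron is cut out by an irredundant subsystem, which is a chamber when the polyhedron
is right-angled. -/
lemma exists_chamber (P : HypPolyhedron n) (hra : P.IsRightAngled) :
    ∃ S : Finset (Fin P.m), Chamber (fun k : S => P.e k) ∧
      ∀ x ∈ fut n, (∀ k : S, mink (P.e k) x ≤ 0) → ∀ k, mink (P.e k) x ≤ 0 := by
  classical
  obtain ⟨p, hp, hpk⟩ := exists_interior P
  obtain ⟨S, -, hS, hwall⟩ := exists_irredundant (convex_fut (n := n)) (fun k => minkL (P.e k))
    Finset.univ (lift_mem_fut.2 hp) (fun k _ => hpk k)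
  have hS' : ∀ x ∈ fut n, (∀ k : S, mink (P.e k) x ≤ 0) → ∀ k, mink (P.e k) x ≤ 0 :=
    fun x hx h k => hS x hx (fun k hk => h ⟨k, hk⟩) k (Finset.mem_univ k)
  have hwall' : ∀ k : S, ∃ w ∈ fut n, mink (P.e k) w = 0 ∧
      ∀ l : S, l ≠ k → mink (P.e l) w < 0 := fun k => by
    obtain ⟨w, hw, hk, hl⟩ := hwall k k.2
    exact ⟨w, hw, hk, fun l hlk => hl l l.2 fun h => hlk (Subtype.ext h)⟩
  refine ⟨S, ⟨fun k => P.unit k, ⟨_, lift_mem_fut.2 hp, fun k => hpk k⟩, hwall', ?_⟩, hS'⟩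
  intro i j hij w hw hi hj hloc
  have hle : ∀ k, ∀ y ∈ P.cl, mink (P.e k) (lift y) ≤ 0 := fun k y hy => by
    rw [cl_eq_region] at hy
    exact hy.2 k
  obtain ⟨wi, _, hii, hil⟩ := hwall' i
  obtain ⟨wj, _, hjj, hjl⟩ := hwall' j
  have hlin : LinearIndependent ℝ ![P.e i, P.e j] := by
    rw [LinearIndependent.pair_iff]
    intro s t hst
    have h1 : mink (s • P.e i + t • P.e j) wi = 0 := by rw [hst, mink_zero_left]
    have h2 : mink (s • P.e i + t • P.e j) wj = 0 := by rw [hst, mink_zero_left]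
    rw [mink_add_left, mink_smul_left, mink_smul_left] at h1 h2
    rw [hii, mul_zero, zero_add] at h1
    rw [hjj, mul_zero, add_zero] at h2
    exact ⟨(mul_eq_zero.1 h2).resolve_right (hjl i hij).ne,
      (mul_eq_zero.1 h1).resolve_right (hil j hij.symm).ne⟩
  have hface := mem_faces_of_tight P hlin (by simp [Fin.forall_fin_two]; exact ⟨hle i, hle j⟩) hw
    (by simp [Fin.forall_fin_two]; exact ⟨hi, hj⟩) (fun x hx => by
      obtain ⟨ε, hε, hf, hk⟩ := hloc x (by simpa using hx 0) (by simpa using hx 1)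
      exact ⟨ε, hε, hf, hS' _ hf hk⟩)
  have hin : ∀ l : Fin 2, P.faceInHyperplane (![P.e i, P.e j] l)
      {y ∈ P.cl | ∀ k, mink (![P.e i, P.e j] k) (lift y) = 0} := fun l x hx hxF => by
    have hx0 : x 0 ≠ 0 := hx.1.2.ne'
    have := hxF.2 l
    rw [mink_lift_kleinMap hx0] at this
    exact (mul_eq_zero.1 this).resolve_left (inv_ne_zero hx0)
  exact hra i j (fun h => hij (Subtype.ext h)) ⟨_, hface, hin 0, hin 1⟩

/-- An irredundant system of defining hyperplanes has at most as many members as there are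
facets. -/
lemma card_le_facets (P : HypPolyhedron n) (hn : 2 ≤ n) {S : Finset (Fin P.m)}
    (hC : Chamber (fun k : S => P.e k))
    (hS : ∀ x ∈ fut n, (∀ k : S, mink (P.e k) x ≤ 0) → ∀ k, mink (P.e k) x ≤ 0) :
    S.card ≤ P.a (n - 1) := by
  classical
  set G : Fin P.m → Set (EuclideanSpace ℝ (Fin n)) :=
    fun k => {y ∈ P.cl | mink (P.e k) (lift y) = 0} with hG
  have hfin : (P.faces (n - 1)).Finite :=
    (Set.finite_range G).subset fun F hF => by
      obtain ⟨k, hk⟩ := exists_wall_of_facet P hn hF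
      exact ⟨k, hk.symm⟩
  have hle : ∀ k, ∀ y ∈ P.cl, mink (P.e k) (lift y) ≤ 0 := fun k y hy => by
    rw [cl_eq_region] at hy
    exact hy.2 k
  have hmem : ∀ k ∈ S, G k ∈ P.faces (n - 1) := by
    intro k hk
    obtain ⟨w, hw, hkw, hlw⟩ := hC.wall ⟨k, hk⟩
    have hlin : LinearIndependent ℝ ![P.e k] :=
      linearIndependent_unique_iff.2 (by simpa using ne_zero_of_unit (P.unit k))
    have := mem_faces_of_tight P hlin (by simpa using hle k) hw (by simpa using hkw)
      (fun x hx => by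
        have hx : mink (P.e k) x = 0 := by simpa using hx 0
        have hev : ∀ᶠ ε : ℝ in nhdsWithin 0 (Set.Ioi 0), w + ε • x ∈ fut n ∧
            ∀ l : S, l ≠ ⟨k, hk⟩ → mink (P.e l) (w + ε • x) < 0 := by
          refine (eventually_of_isOpen isOpen_fut hw x).and ?_
          simp only [Filter.eventually_all]
          exact fun l hl => eventually_of_isOpen (isOpen_mink_neg _) (hlw l hl) x
        obtain ⟨ε, ⟨hf, hl⟩, hε⟩ := (hev.and self_mem_nhdsWithin).exists
        refine ⟨ε, hε, hf, hS _ hf fun l => ?_⟩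
        by_cases h : l = ⟨k, hk⟩
        · subst h
          rw [mink_add_right, mink_smul_right, hx, mul_zero, add_zero]
          exact hkw.le
        · exact (hl l h).le)
    simpa using this
  have hinj : Set.InjOn G S := by
    intro k hk l hl hkl
    by_contra hne
    obtain ⟨w, hw, hkw, hlw⟩ := hC.wall ⟨k, hk⟩
    have hw0 := fut_pos hw
    have hwe := hS w hw (fun m => by
      by_cases h : m = ⟨k, hk⟩
      · subst h; exact hkw.le
      · exact (hlw m h).le)
    have hwk : kleinMap w ∈ G k := by
      refine ⟨?_, by rw [mink_lift_kleinMap hw0.ne']; simp only at hkw; rw [hkw, mul_zero]⟩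
      rw [cl_eq_region]
      refine ⟨?_, fun m => ?_⟩
      · rw [norm_kleinMap hw0, div_le_one hw0]
        exact le_of_lt hw
      · rw [mink_lift_kleinMap hw0.ne']
        exact mul_nonpos_of_nonneg_of_nonpos (inv_nonneg.2 hw0.le) (hwe m)
    rw [hkl] at hwk
    have h0 := hwk.2
    rw [mink_lift_kleinMap hw0.ne'] at h0
    exact (hlw ⟨l, hl⟩ (fun h => hne (congrArg Subtype.val h).symm)).ne
      ((mul_eq_zero.1 h0).resolve_left (inv_ne_zero hw0.ne'))
  have h1 := Set.ncard_le_ncard (s := G '' S) (t := P.faces (n - 1))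
    (by rintro _ ⟨k, hk, rfl⟩; exact hmem k hk) hfin
  rwa [hinj.ncard_image, Set.ncard_coe_finset] at h1

/-- There are at most as many facets as defining hyperplanes. -/
lemma facets_le (P : HypPolyhedron n) (hn : 2 ≤ n) : P.a (n - 1) ≤ P.m := by
  have h1 := Set.ncard_le_ncard (s := P.faces (n - 1))
    (t := Set.range fun k => {y ∈ P.cl | mink (P.e k) (lift y) = 0})
    (fun F hF => by
      obtain ⟨k, hk⟩ := exists_wall_of_facet P hn hF
      exact ⟨k, hk.symm⟩) (Set.finite_range _)
  refine h1.trans ?_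
  rw [← Set.image_univ]
  refine (Set.ncard_image_le Set.finite_univ).trans ?_
  simp [Set.ncard_univ]

end Tight

/-! ### Facets as polyhedra, and the counting argument -/

section Count

lemma add_smul_mem_fut {z w : Fin (n + 1) → ℝ} (hz : ‖sp z‖ ≤ z 0) (hw : w ∈ fut n) {t : ℝ}
    (ht : 0 < t) : z + t • w ∈ fut n := by
  have htw : ‖sp (t • w)‖ < (t • w) 0 := smul_mem_fut hw ht
  show ‖sp (z + t • w)‖ < (z + t • w) 0
  rw [sp_add, Pi.add_apply]
  exact (norm_add_le _ _).trans_lt (add_lt_add_of_le_of_lt hz htw)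

lemma mink_nonpos_of_approx {e z w : Fin (n + 1) → ℝ}
    (h : ∀ t : ℝ, 0 < t → mink e (z + t • w) ≤ 0) : mink e z ≤ 0 := by
  have hc : Continuous fun t : ℝ => mink e (z + t • w) :=
    (continuous_mink e).comp (by fun_prop)
  have ht : Filter.Tendsto (fun t : ℝ => mink e (z + t • w)) (nhdsWithin 0 (Set.Ioi 0))
      (nhds (mink e z)) := by
    simpa using (hc.tendsto 0).mono_left nhdsWithin_le_nhds
  exact le_of_tendsto ht (Filter.mem_of_superset self_mem_nhdsWithin fun t ht => h t ht)

lemma exists_idealVert {P : HypPolyhedron n} (hfv : P.FiniteVolume) (hnc : ¬ P.IsCompactPoly) :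
    ∃ v, v ∈ idealPts P.e := by
  by_contra! h
  refine hnc ⟨hfv, fun v hv => ?_⟩
  have hcl := verts_subset_cl P hv
  rw [cl_eq_region] at hcl
  refine lt_of_le_of_ne hcl.1 fun h1 => h v ?_
  rw [← idealVerts_eq]
  exact ⟨hv, h1⟩

lemma idealPts_finite {P : HypPolyhedron n} (hfv : P.FiniteVolume) : (idealPts P.e).Finite := by
  rw [← idealVerts_eq]
  exact hfv.1.subset fun v hv => hv.1

/-- A facet of a chamber through an ideal vertex is a polyhedron of the family one dimension
lower. -/
lemma nu_le_of_facet {d : ℕ} (hd : 3 ≤ d) {ι : Type*} [Fintype ι] {e : ι → Fin (d + 2) → ℝ}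
    (hC : Chamber e) (hfin : (idealPts e).Finite) (i : ι) {v : EuclideanSpace ℝ (Fin (d + 1))}
    (hv : v ∈ idealPts e) (hiv : mink (e i) (lift v) = 0) :
    nu d ≤ Nat.card {k // mink (e i) (e k) = 0} +
      {y ∈ idealPts e | mink (e i) (lift y) = 0}.ncard := by
  classical
  obtain ⟨φ, hφ, hφe, hφs, hφf⟩ := exists_isometry (e i) (hC.unit i)
  obtain ⟨w, hw, hiw, hkw⟩ := hC.wall i
  obtain ⟨w', rfl⟩ := hφs w hiw
  have hw' : w' ∈ fut d := (hφf w').1 hw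
  choose ψ hψ using fun k : {k // mink (e i) (e k) = 0} => hφs (e k) k.2
  have hψu : ∀ k, mink (ψ k) (ψ k) = 1 := fun k => by rw [← hφ, hψ, hC.unit]
  have hki : ∀ k : {k // mink (e i) (e k) = 0}, k.1 ≠ i := fun k h => by
    have h1 := k.2
    rw [h, hC.unit] at h1
    exact one_ne_zero h1
  have hψw : ∀ k, mink (ψ k) w' < 0 := fun k => by
    rw [← hφ, hψ]; exact hkw k (hki k)
  have hinj : ∀ x, φ x = 0 → x = 0 := fun x hx => by
    by_contra hne
    have h1 := mink_self_pos hw' hne (by rw [← hφ, hx, mink_zero_left])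
    rw [← hφ, hx, mink_zero_left] at h1
    exact h1.false
  let ρ := Fintype.equivFin {k // mink (e i) (e k) = 0}
  let q : Fin (Fintype.card {k // mink (e i) (e k) = 0}) → Fin (d + 1) → ℝ :=
    fun a => ψ (ρ.symm a)
  let Q : HypPolyhedron d := ⟨_, q, fun a => hψu _, (interior_nonempty_iff fun a => hψu _).2
    ⟨kleinMap w', by
      rw [norm_kleinMap (fut_pos hw'), div_lt_one (fut_pos hw')]; exact hw', fun k => by
      rw [mink_lift_kleinMap (fut_pos hw').ne']
      exact mul_neg_of_pos_of_neg (inv_pos.2 (fut_pos hw')) (hψw _)⟩⟩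
  have hnull : ∀ {m : ℕ} {y : EuclideanSpace ℝ (Fin m)}, ‖y‖ = 1 → mink (lift y) (lift y) = 0 :=
    fun hy => by rw [mink_self]; simp [hy]
  have hz : ∀ y ∈ idealPts q, 0 < φ (lift y) 0 ∧ ‖sp (φ (lift y))‖ = φ (lift y) 0 := by
    intro y hy
    refine null_of_mink_neg hw (by rw [hφ]; exact hnull hy.1) ?_
    rw [hφ]
    exact mink_neg_of_fut hw' (by simp [hy.1]) (by simp)
  have hmaps : Set.MapsTo (fun y => kleinMap (φ (lift y))) (idealPts q)
      {y ∈ idealPts e | mink (e i) (lift y) = 0} := by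
    intro y hy
    obtain ⟨hz0, hz1⟩ := hz y hy
    refine ⟨⟨?_, fun k => ?_⟩, ?_⟩
    · rw [norm_kleinMap hz0, hz1, div_self hz0.ne']
    · rw [mink_lift_kleinMap hz0.ne']
      refine mul_nonpos_of_nonneg_of_nonpos (inv_nonneg.2 hz0.le) ?_
      refine mink_nonpos_of_approx (w := φ w') fun t ht => ?_
      refine hC.cut i (add_smul_mem_fut hz1.le hw ht) ?_ (fun l hl => ?_) k
      · rw [mink_add_right, mink_smul_right, hφe, hφe, mul_zero, add_zero]
      · have h1 := hy.2 (ρ ⟨l, hl⟩)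
        have h2 := hψw ⟨l, hl⟩
        simp only [q, Equiv.symm_apply_apply] at h1
        rw [← hφ, hψ] at h1 h2
        rw [mink_add_right, mink_smul_right]
        have := mul_neg_of_pos_of_neg ht h2
        linarith
    · rw [mink_lift_kleinMap hz0.ne', hφe, mul_zero]
  have hinjOn : Set.InjOn (fun y => kleinMap (φ (lift y))) (idealPts q) := by
    intro x hx y hy hxy
    simp only at hxy
    obtain ⟨hx0, -⟩ := hz x hx
    obtain ⟨hy0, -⟩ := hz y hy
    obtain ⟨a, b, u, ha, hb, h1, h2⟩ : ∃ (a b : ℝ) (u : Fin (d + 2) → ℝ), a ≠ 0 ∧ b ≠ 0 ∧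
        φ (lift x) = a • u ∧ φ (lift y) = b • u :=
      ⟨_, _, _, hx0.ne', hy0.ne', (smul_lift_kleinMap hx0.ne').symm, by
        rw [hxy]; exact (smul_lift_kleinMap hy0.ne').symm⟩
    have h3 : φ (b • lift x - a • lift y) = 0 := by
      rw [map_sub, map_smul, map_smul, h1, h2, smul_smul, smul_smul, mul_comm, sub_self]
    have h4 := congrArg kleinMap (sub_eq_zero.1 (hinj _ h3))
    rwa [kleinMap_smul hb, kleinMap_smul ha, kleinMap_lift, kleinMap_lift] at h4
  have hAfin : {y ∈ idealPts e | mink (e i) (lift y) = 0}.Finite := hfin.subset fun y hy => hy.1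
  have hqfin : (idealPts q).Finite := Set.Finite.of_injOn hmaps hinjOn hAfin
  have hQfv : Q.FiniteVolume := finiteVolume_of_cone_subset Q fun x hx =>
    cone_subset_of_finite (by omega) hqfin hw' (fun k => hψw _) x hx
  have hQra : Q.IsRightAngled := isRightAngled_of_gram Q hd fun a b hab => by
    show mink (ψ (ρ.symm a)) (ψ (ρ.symm b)) = 0 ∨ mink (ψ (ρ.symm a)) (ψ (ρ.symm b)) ≤ -1
    rw [← hφ, hψ, hψ]
    exact hC.gram fun h => hab (ρ.symm.injective (Subtype.ext h))
  have hQnc : ¬ Q.IsCompactPoly := fun hcomp => by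
    obtain ⟨x, hx⟩ := hφs _ hiv
    obtain ⟨hx0, hx1⟩ := null_of_mink_neg (z := x) hw' (by rw [← hφ, hx]; exact hnull hv.1) (by
      rw [← hφ, hx]
      exact mink_neg_of_fut hw (by simp [hv.1]) (by simp))
    have hmem : kleinMap x ∈ idealPts Q.e := by
      refine ⟨by rw [norm_kleinMap hx0, hx1, div_self hx0.ne'], fun k => ?_⟩
      rw [mink_lift_kleinMap hx0.ne']
      refine mul_nonpos_of_nonneg_of_nonpos (inv_nonneg.2 hx0.le) ?_
      show mink (ψ (ρ.symm k)) x ≤ 0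
      rw [← hφ, hψ, hx]
      exact hv.2 _
    rw [← idealVerts_eq] at hmem
    exact (hcomp.2 _ hmem.1).ne hmem.2
  refine (Nat.sInf_le (⟨Q, hQfv, hQra, hQnc, rfl⟩ : Q.a (d - 1) + Q.vInf ∈ nuSet d)).trans ?_
  refine add_le_add ?_ ?_
  · rw [Nat.card_eq_fintype_card]
    exact facets_le Q (by omega)
  · rw [HypPolyhedron.vInf, idealVerts_eq]
    exact Set.ncard_le_ncard_of_injOn _ hmaps hinjOn hAfin

/-- Two opposite facets through an ideal vertex bound `ν(P)` from below. -/
lemma two_mul_nu_le {d : ℕ} (hd : 3 ≤ d) (P : HypPolyhedron (d + 1)) (hfv : P.FiniteVolume)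
    (hra : P.IsRightAngled) (hnc : ¬ P.IsCompactPoly) :
    2 * nu d + 5 ≤ P.a d + P.vInf + 2 * (d + 1) := by
  classical
  obtain ⟨S, hC, hS⟩ := exists_chamber P hra
  set e : S → Fin (d + 2) → ℝ := fun k => P.e k with he
  obtain ⟨p, hp, hpk⟩ := hC.interior
  have hideal : idealPts P.e = idealPts e := by
    refine Set.Subset.antisymm (fun y hy => ⟨hy.1, fun k => hy.2 k⟩) fun y hy => ⟨hy.1, fun k => ?_⟩
    refine mink_nonpos_of_approx (w := p) fun t ht => ?_
    refine hS _ (add_smul_mem_fut (by simp [hy.1]) hp ht) (fun l => ?_) k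
    rw [mink_add_right, mink_smul_right]
    exact add_nonpos (hy.2 l) (mul_nonpos_of_nonneg_of_nonpos ht.le (hpk l).le)
  have hfin : (idealPts e).Finite := hideal ▸ idealPts_finite hfv
  have hL := cone_subset_of_finite (by omega) hfin hp hpk
  obtain ⟨v, hv⟩ := exists_idealVert hfv hnc
  rw [hideal] at hv
  have hz : ‖sp (lift v)‖ = lift v 0 := by simp [hv.1]
  have hz0 : 0 < lift v 0 := by simp
  obtain ⟨i, hi⟩ := exists_tight hL hz hv.2
  obtain ⟨j, hji, hj, hne⟩ := exists_partner hL hz hv.2 (hC.unit i) hi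
  have hnorm : mink (e i + e j) (e i + e j) = 2 + 2 * mink (e i) (e j) := by
    simp only [mink_add_left, mink_add_right, hC.unit, mink_comm (e j) (e i)]; ring
  have hsum : mink (e i + e j) (lift v) = 0 := by rw [mink_add_left, hi, hj, add_zero]
  have hm1 : mink (e i) (e j) = -1 := by
    have h1 := (hC.gram hji.symm).resolve_left hne
    have h2 := mink_self_nonneg_of_null hz0 hz hsum
    linarith
  obtain ⟨c, hc⟩ : ∃ c : ℝ, e i + e j = c • lift v :=
    ⟨_, eq_smul_of_null hz0 hz hsum (by rw [hnorm, hm1]; norm_num)⟩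
  have hc0 : c ≠ 0 := by
    rintro rfl
    rw [zero_smul] at hc
    have h1 : mink (e i + e j) p = 0 := by rw [hc, mink_zero_left]
    rw [mink_add_left] at h1
    linarith [hpk i, hpk j]
  have hperp : ∀ x, mink (e i) x = 0 → mink (e j) x = 0 → mink (lift v) x = 0 := fun x h1 h2 => by
    have h3 : mink (e i + e j) x = 0 := by rw [mink_add_left, h1, h2, add_zero]
    rw [hc, mink_smul_left] at h3
    exact (mul_eq_zero.1 h3).resolve_left hc0
  let T : S → Finset S := fun k => Finset.univ.filter fun l => mink (e k) (e l) = 0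
  have hT : ∀ k, Nat.card {l // mink (e k) (e l) = 0} = (T k).card := fun k => by
    rw [Nat.card_eq_fintype_card, Fintype.card_subtype]
  have hTij : (T i ∩ T j).card + 4 ≤ 2 * (d + 1) := by
    refine card_tight_le hz0 hz hp hC.unit (fun k l hkl => hC.gram hkl) hi _ (fun k hk => ?_)
      fun k hk => ?_
    · simp only [T, Finset.mem_inter, Finset.mem_filter, Finset.mem_univ, true_and] at hk
      rw [mink_comm]
      exact hperp _ hk.1 hk.2
    · simp only [T, Finset.mem_inter, Finset.mem_filter, Finset.mem_univ, true_and] at hk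
      exact hk.1
  have hTcard : (T i ∪ T j).card + 2 ≤ P.a d := by
    refine le_trans ?_ (card_le_facets P (by omega) hC hS)
    have hdisj : Disjoint (T i ∪ T j) {i, j} := by
      rw [Finset.disjoint_right]
      intro k hk
      have hji' : mink (e j) (e i) = -1 := by rw [mink_comm, hm1]
      have hii := hC.unit i
      have hjj := hC.unit j
      simp only [Finset.mem_insert, Finset.mem_singleton] at hk
      simp only [T, Finset.mem_union, Finset.mem_filter, Finset.mem_univ, true_and]
      rcases hk with rfl | rfl
      · rw [hii, hji']; norm_num
      · rw [hjj, hm1]; norm_num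
    have h1 := Finset.card_le_univ ((T i ∪ T j) ∪ {i, j})
    rwa [Finset.card_union_of_disjoint hdisj, Finset.card_pair hji.symm,
      Fintype.card_coe] at h1
  let A : S → Set (EuclideanSpace ℝ (Fin (d + 1))) :=
    fun k => {y ∈ idealPts e | mink (e k) (lift y) = 0}
  have hAfin : ∀ k, (A k).Finite := fun k => hfin.subset fun y hy => hy.1
  have hAint : (A i ∩ A j).ncard ≤ 1 := by
    have hsub : A i ∩ A j ⊆ {v} := by
      rintro y ⟨⟨hy, hyi⟩, -, hyj⟩
      have h1 := hperp _ hyi hyj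
      rw [mink_comm] at h1
      have h2 := eq_smul_of_null hz0 hz h1 (by rw [mink_self]; simp [hy.1])
      have h3 := congrArg kleinMap h2
      rwa [kleinMap_smul (by simp), kleinMap_lift, kleinMap_lift] at h3
    simpa using Set.ncard_le_ncard hsub (Set.finite_singleton v)
  have hAun : (A i ∪ A j).ncard ≤ P.vInf := by
    rw [HypPolyhedron.vInf, idealVerts_eq, hideal]
    exact Set.ncard_le_ncard (Set.union_subset (fun y hy => hy.1) fun y hy => hy.1) hfin
  have hAcard := Set.ncard_union_add_ncard_inter (A i) (A j) (hAfin i) (hAfin j)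
  have hTun := Finset.card_union_add_card_inter (T i) (T j)
  have h1 : nu d ≤ (T i).card + (A i).ncard := by
    rw [← hT]; exact nu_le_of_facet hd hC hfin i hv hi
  have h2 : nu d ≤ (T j).card + (A j).ncard := by
    rw [← hT]; exact nu_le_of_facet hd hC hfin j hv hj
  omega

/-- With the given conventions no polygon belongs to the family. -/
lemma nuSet_two : nuSet 2 = ∅ := by
  rw [Set.eq_empty_iff_forall_notMem]
  rintro m ⟨P, hfv, hra, hnc, -⟩
  obtain ⟨v, hv⟩ := exists_idealVert hfv hnc
  obtain ⟨p, hp, hpk⟩ := exists_interior P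
  have hL := cone_subset_of_finite le_rfl (idealPts_finite hfv) (lift_mem_fut.2 hp) hpk
  have hz : ‖sp (lift v)‖ = lift v 0 := by simp [hv.1]
  obtain ⟨i, hi⟩ := exists_tight hL hz hv.2
  obtain ⟨j, hji, -, hne⟩ := exists_partner hL hz hv.2 (P.unit i) hi
  have hin : ∀ e, P.faceInHyperplane e {v} := fun e x hx hxv => by
    have h1 : kleinMap x ∈ kleinMap '' P.carrier := ⟨x, hx, rfl⟩
    rw [HypPolyhedron.carrier, image_kleinMap, Set.mem_singleton_iff.1 hxv] at h1
    exact absurd hv.1 h1.1.ne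
  have hvert : v ∈ P.verts := by
    have := idealVerts_eq P ▸ hv
    exact this.1
  refine hne (hra i j hji.symm ⟨{v}, ⟨hvert, Set.singleton_nonempty v, ?_⟩, hin _, hin _⟩)
  rw [sdim, vectorSpan_singleton, finrank_bot]

lemma nu_recursion_lower (n : ℕ) (hn : 3 ≤ n) (P : HypPolyhedron n)
    (hfv : P.FiniteVolume) (hra : P.IsRightAngled) (hnc : ¬ P.IsCompactPoly) :
    (5 : ℤ) - 2 * (n : ℤ) + 2 * (nu (n - 1) : ℤ) ≤ (P.a (n - 1) : ℤ) + (P.vInf : ℤ) := by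
  obtain ⟨d, rfl⟩ : ∃ d, n = d + 1 := ⟨n - 1, by omega⟩
  rw [Nat.add_sub_cancel]
  rcases Nat.lt_or_ge d 3 with h | h
  · obtain rfl : d = 2 := by omega
    have h0 : nu 2 = 0 := by rw [nu, nuSet_two, Nat.sInf_empty]
    rw [h0]
    push_cast
    have : (0 : ℤ) ≤ (P.a 2 : ℤ) + (P.vInf : ℤ) := by positivity
    linarith
  · have := two_mul_nu_le h P hfv hra hnc
    push_cast
    omega

end Count

end RightAngled

/-- For `n ≥ 3` and every finite-volume non-compact right-angled convex hyperbolic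
`n`-polyhedron `P`, `ν(P) = a_{n-1}(P) + v_∞(P) ≥ 5 - 2n + 2ν_{n-1}`; in particular
`νₙ ≥ 5 - 2n + 2ν_{n-1}`. -/
theorem nu_recursion (n : ℕ) (hn : 3 ≤ n) (P : HypPolyhedron n)
    (hfv : P.FiniteVolume) (hra : P.IsRightAngled) (hnc : ¬ P.IsCompactPoly) :
    ((5 : ℤ) - 2 * (n : ℤ) + 2 * (nu (n - 1) : ℤ) ≤ (P.a (n - 1) : ℤ) + (P.vInf : ℤ)) ∧
      ((5 : ℤ) - 2 * (n : ℤ) + 2 * (nu (n - 1) : ℤ) ≤ (nu n : ℤ)) := by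
  refine ⟨RightAngled.nu_recursion_lower n hn P hfv hra hnc, ?_⟩
  obtain ⟨P', hfv', hra', hnc', h⟩ := Nat.sInf_mem (s := nuSet n) ⟨_, P, hfv, hra, hnc, rfl⟩
  rw [nu.eq_1 n, ← h]
  push_cast
  exact RightAngled.nu_recursion_lower n hn P' hfv' hra' hnc'
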